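/- There exist finite sets P and Q of points in the plane in general position, each of cardinality 6, and a bijection φ: P → Q, with the following three properties: (i) there are no compatible triangulations of P and Q via φ; (ii) for every choice of a single Steiner point a_P ∉ P and a single Steiner point a_Q ∉ Q, there are no compatible triangulations of P ∪ {a_P} and Q ∪ {a_Q} via any bijection extending φ (with φ extended by a_P ↦ a_Q); (iii) there exist two Steiner points a_P, b_P ∉ P and two Steiner points a_Q, b_Q ∉ Q such that P ∪ {a_P, b_P} and Q ∪ {a_Q, b_Q} have compatible triangulations via the bijection extending φ by a_P ↦ a_Q and b_P ↦ b_Q. -/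

import Mathlib

open Set

/-- Points of the plane. -/
abbrev Pt : Type := ℝ × ℝ

noncomputable section

/-- The determinant of two plane vectors. -/
def det2 (u v : Pt) : ℝ := u.1 * v.2 - u.2 * v.1

/-- A triple `(a,b,c)` of points is clockwise-ordered if `det (b-a, c-a) < 0`. -/
def Clockwise (a b c : Pt) : Prop := det2 (b - a) (c - a) < 0

/-- The closed segments `[a,b]` and `[c,d]` cross: they intersect in a point that is not a
common endpoint of the two segments. -/
def Crosses (a b c d : Pt) : Prop :=
  ∃ x : Pt, x ∈ segment ℝ a b ∧ x ∈ segment ℝ c d ∧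
    ¬((x = a ∨ x = b) ∧ (x = c ∨ x = d))

/-- `T` is a set of unordered pairs of distinct points of `P` whose corresponding
segments are pairwise non-crossing. -/
def ValidSegs (P : Finset Pt) (T : Set (Sym2 Pt)) : Prop :=
  (∀ e ∈ T, ∃ a b : Pt, a ∈ P ∧ b ∈ P ∧ a ≠ b ∧ e = s(a, b)) ∧
  (∀ a b c d : Pt, s(a, b) ∈ T → s(c, d) ∈ T → s(a, b) ≠ s(c, d) → ¬ Crosses a b c d)

/-- A triangulation of `P`: a maximal (w.r.t. inclusion) set of unordered pairs of distinct
points of `P`, no two of whose segments cross. -/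
def IsTriangulation (P : Finset Pt) (T : Set (Sym2 Pt)) : Prop :=
  ValidSegs P T ∧ ∀ T' : Set (Sym2 Pt), ValidSegs P T' → T ⊆ T' → T' = T

/-- A convex hull point of `P`: a point of `P` on the boundary of `conv P`. -/
def HullPoint (P : Finset Pt) (p : Pt) : Prop :=
  p ∈ P ∧ p ∈ frontier (convexHull ℝ (P : Set Pt))

/-- An internal point of `P`: a point of `P` in the interior of `conv P`. -/
def InternalPoint (P : Finset Pt) (p : Pt) : Prop :=
  p ∈ P ∧ p ∈ interior (convexHull ℝ (P : Set Pt))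

/-- The number of convex hull points of `P`. -/
def hullCount (P : Finset Pt) : ℕ := {p : Pt | HullPoint P p}.ncard

/-- The number of internal points of `P`. -/
def internalCount (P : Finset Pt) : ℕ := {p : Pt | InternalPoint P p}.ncard

/-- The open triangle with vertices `a`, `b`, `c`. -/
def openTriangle (a b c : Pt) : Set Pt := interior (convexHull ℝ ({a, b, c} : Set Pt))

/-- `(a,b,c)` is a triangle of the triangulation `T` of `P`: the three points are distinct
points of `P`, the three pairs are in `T`, and the open triangle `abc` contains no point of
`P` and meets no segment of `T`. -/
def IsTriangleOf (P : Finset Pt) (T : Set (Sym2 Pt)) (a b c : Pt) : Prop :=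
  a ∈ P ∧ b ∈ P ∧ c ∈ P ∧ a ≠ b ∧ b ≠ c ∧ a ≠ c ∧
  s(a, b) ∈ T ∧ s(b, c) ∈ T ∧ s(a, c) ∈ T ∧
  (∀ p ∈ P, p ∉ openTriangle a b c) ∧
  (∀ u v : Pt, s(u, v) ∈ T → ∀ x ∈ segment ℝ u v, x ∉ openTriangle a b c)

/-- Triangulations `TP` of `P` and `TQ` of `Q` are compatible via the bijection `φ : P → Q`:
`(a,b,c)` is a clockwise-ordered triangle of `TP` iff `(φ a, φ b, φ c)` is a
clockwise-ordered triangle of `TQ`. -/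
def CompatibleVia (P Q : Finset Pt) (TP TQ : Set (Sym2 Pt)) (φ : Pt → Pt) : Prop :=
  Set.BijOn φ (P : Set Pt) (Q : Set Pt) ∧
  ∀ a b c : Pt, a ∈ P → b ∈ P → c ∈ P →
    ((IsTriangleOf P TP a b c ∧ Clockwise a b c) ↔
     (IsTriangleOf Q TQ (φ a) (φ b) (φ c) ∧ Clockwise (φ a) (φ b) (φ c)))

/-- Triangulations `TP` of `P` and `TQ` of `Q` are compatible. -/
def Compatible (P Q : Finset Pt) (TP TQ : Set (Sym2 Pt)) : Prop :=
  ∃ φ : Pt → Pt, CompatibleVia P Q TP TQ φ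

/-- The degree of a point `p` in a triangulation `T`: the number of pairs of `T`
containing `p`. -/
def degreeIn (T : Set (Sym2 Pt)) (p : Pt) : ℕ := {e ∈ T | p ∈ e}.ncard

/-- `P` is in general position: no three points of `P` are collinear. -/
def GenPos (P : Finset Pt) : Prop :=
  ∀ a b c : Pt, a ∈ P → b ∈ P → c ∈ P → a ≠ b → b ≠ c → a ≠ c →
    ¬ Collinear ℝ ({a, b, c} : Set Pt)

end


/-! ### Basic facts about valid families and triangulations -/

/-- A real function on the plane that respects affine combinations of two points. -/
def Aff (X : Pt → ℝ) : Prop :=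
  ∀ p q : Pt, ∀ s : ℝ, X ((1 - s) • p + s • q) = (1 - s) * X p + s * X q

lemma mem_seg_iff {a b x : Pt} :
    x ∈ segment ℝ a b ↔ ∃ s : ℝ, 0 ≤ s ∧ s ≤ 1 ∧ x = (1 - s) • a + s • b := by
  rw [segment_eq_image]
  constructor
  · rintro ⟨s, hs, rfl⟩
    exact ⟨s, hs.1, hs.2, rfl⟩
  · rintro ⟨s, h0, h1, rfl⟩
    exact ⟨s, ⟨h0, h1⟩, rfl⟩

lemma lerp_ne_left {e f : Pt} (hef : e ≠ f) {t : ℝ} (ht : t ≠ 0) :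
    (1 - t) • e + t • f ≠ e := by
  intro h
  apply hef
  have h2 : t • (f - e) = 0 := by
    have : t • (f - e) = ((1 - t) • e + t • f) - e := by module
    rw [this, h, sub_self]
  rcases smul_eq_zero.1 h2 with h3 | h3
  · exact absurd h3 ht
  · exact (sub_eq_zero.1 h3).symm

lemma lerp_ne_right {e f : Pt} (hef : e ≠ f) {t : ℝ} (ht : t ≠ 1) :
    (1 - t) • e + t • f ≠ f := by
  have := lerp_ne_left hef.symm (t := 1 - t) (by intro h; apply ht; linarith)
  intro h
  apply this
  refine Eq.trans ?_ h
  module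

/-- Two edges of a valid family sharing a point interior to the first are equal. -/
lemma valid_interior {S : Finset Pt} {T : Set (Sym2 Pt)} (hT : ValidSegs S T) {e f c d : Pt}
    (h1 : s(e, f) ∈ T) (h2 : s(c, d) ∈ T) (hef : e ≠ f) {t : ℝ} (t0 : 0 < t) (t1 : t < 1)
    (hx : (1 - t) • e + t • f ∈ segment ℝ c d) : s(e, f) = s(c, d) := by
  by_contra hne
  refine hT.2 e f c d h1 h2 hne ⟨_, mem_seg_iff.2 ⟨t, t0.le, t1.le, rfl⟩, hx, ?_⟩
  rintro ⟨h | h, -⟩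
  · exact lerp_ne_left hef t0.ne' h
  · exact lerp_ne_right hef t1.ne h

lemma valid_mem {S : Finset Pt} {T : Set (Sym2 Pt)} (hT : ValidSegs S T) {e f : Pt}
    (h1 : s(e, f) ∈ T) : e ∈ S ∧ f ∈ S ∧ e ≠ f := by
  obtain ⟨a, b, ha, hb, hab, h⟩ := hT.1 _ h1
  rcases Sym2.eq_iff.1 h with ⟨rfl, rfl⟩ | ⟨rfl, rfl⟩
  · exact ⟨ha, hb, hab⟩
  · exact ⟨hb, ha, hab.symm⟩

lemma crosses_symm {a b c d : Pt} (h : Crosses a b c d) : Crosses c d a b := by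
  obtain ⟨x, h1, h2, h3⟩ := h
  exact ⟨x, h2, h1, fun h => h3 ⟨h.2, h.1⟩⟩

lemma crosses_congr {a b a' b' c d : Pt} (h : s(a, b) = s(a', b')) (hc : Crosses a b c d) :
    Crosses a' b' c d := by
  rcases Sym2.eq_iff.1 h with ⟨rfl, rfl⟩ | ⟨rfl, rfl⟩
  · exact hc
  · obtain ⟨x, h1, h2, h3⟩ := hc
    exact ⟨x, by rwa [segment_symm], h2, fun h => h3 ⟨h.1.symm, h.2⟩⟩

/-- In a triangulation, a segment crossing no edge is an edge. -/
lemma tri_add {S : Finset Pt} {T : Set (Sym2 Pt)} (hT : IsTriangulation S T) {p q : Pt}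
    (hp : p ∈ S) (hq : q ∈ S) (hpq : p ≠ q)
    (h : ∀ e f, s(e, f) ∈ T → s(e, f) ≠ s(p, q) → ¬ Crosses p q e f) : s(p, q) ∈ T := by
  have key : insert s(p, q) T = T := by
    apply hT.2 _ _ (Set.subset_insert _ _)
    refine ⟨?_, ?_⟩
    · intro e he
      rcases he with rfl | he
      · exact ⟨p, q, hp, hq, hpq, rfl⟩
      · exact hT.1.1 e he
    · intro a b c d hab hcd hne hc
      rcases hab with hab | hab
      · rcases hcd with hcd | hcd
        · exact hne (hab.trans hcd.symm)
        · exact h c d hcd (fun h' => hne (hab.trans h'.symm)) (crosses_congr hab hc)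
      · rcases hcd with hcd | hcd
        · exact h a b hab (fun h' => hne (h'.trans hcd.symm))
            (crosses_congr hcd (crosses_symm hc))
        · exact hT.1.2 a b c d hab hcd hne hc
  rw [← key]
  exact Set.mem_insert _ _

/-- A point of the open triangle has positive value under an affine function that is nonnegative
on the vertices and not zero at all of them. -/
lemma openTriangle_pos {X : Pt → ℝ} (hX : Aff X) {a b c w x : Pt} (ha : 0 ≤ X a) (hb : 0 ≤ X b)
    (hc : 0 ≤ X c) (hw : 0 < X w) (hx : x ∈ openTriangle a b c) : 0 < X x := by
  have hsub : convexHull ℝ ({a, b, c} : Set Pt) ⊆ {p | 0 ≤ X p} := by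
    apply convexHull_min
    · rintro p (rfl | rfl | rfl) <;> assumption
    · intro p hp q hq s t hs ht hst
      have : s = 1 - t := by linarith
      subst this
      change 0 ≤ X _
      rw [hX]
      exact add_nonneg (mul_nonneg hs hp) (mul_nonneg ht hq)
  have hnhds : convexHull ℝ ({a, b, c} : Set Pt) ∈ nhds x := mem_interior_iff_mem_nhds.1 hx
  have hcont : Continuous (fun s : ℝ => (1 - s) • x + s • w) := by fun_prop
  have h0 : (fun s : ℝ => (1 - s) • x + s • w) 0 = x := by simp
  have hev : ∀ᶠ s in nhds (0 : ℝ), (1 - s) • x + s • w ∈ convexHull ℝ ({a, b, c} : Set Pt) := by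
    have := hcont.continuousAt (x := 0)
    unfold ContinuousAt at this
    rw [h0] at this
    exact this hnhds
  have hev2 : ∀ᶠ s in nhdsWithin (0 : ℝ) (Set.Iio 0), s < 0 ∧
      (1 - s) • x + s • w ∈ convexHull ℝ ({a, b, c} : Set Pt) :=
    (eventually_mem_nhdsWithin).and (nhdsWithin_le_nhds hev)
  obtain ⟨s, hs0, hs⟩ := hev2.exists
  have h1 := hsub hs
  change 0 ≤ X _ at h1
  rw [hX] at h1
  by_contra hneg
  push Not at hneg
  nlinarith [mul_neg_of_neg_of_pos hs0 hw, mul_nonneg (by linarith : (0:ℝ) ≤ 1 - s) (neg_nonneg.2 hneg)]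

lemma zero_between {h : Pt → ℝ} (hh : Aff h) {z w : Pt} (hz : 0 ≤ h z) (hw : h w ≤ 0) :
    ∃ s : ℝ, 0 ≤ s ∧ s ≤ 1 ∧ h ((1 - s) • z + s • w) = 0 := by
  rcases eq_or_lt_of_le hz with h0 | h0
  · exact ⟨0, le_rfl, zero_le_one, by rw [hh, ← h0]; ring⟩
  · have hd : 0 < h z - h w := by linarith
    refine ⟨h z / (h z - h w), by positivity, ?_, ?_⟩
    · rw [div_le_one hd]; linarith
    · rw [hh]; field_simp; ring

/-! ### A triangle with two sides present -/

lemma tri_exit {S : Finset Pt} {T : Set (Sym2 Pt)} (hT : IsTriangulation S T) {X Y : Pt → ℝ}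
    (hX : Aff X) (hY : Aff Y) (inj : ∀ p q, X p = X q → Y p = Y q → p = q) {o c d : Pt}
    (hoc : s(o, c) ∈ T) (hod : s(o, d) ∈ T) (Xo : X o = 0) (Yo : Y o = 0) (Xc : X c = 1)
    (Yc : Y c = 0) (Xd : X d = 0) (Yd : Y d = 1)
    (hS : ∀ p ∈ S, 0 ≤ X p → 0 ≤ Y p → X p + Y p ≤ 1 → p = o ∨ p = c ∨ p = d)
    {e f : Pt} (hef : s(e, f) ∈ T) {t : ℝ} (t0 : 0 ≤ t) (t1 : t < 1)
    (hXz : 0 < X ((1 - t) • f + t • e)) (hYz : 0 < Y ((1 - t) • f + t • e))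
    (hs : X ((1 - t) • f + t • e) + Y ((1 - t) • f + t • e) ≤ 1)
    (hse : X e + Y e ≤ X f + Y f) : e = o ∨ e = c ∨ e = d := by
  obtain ⟨heS, hfS, hne⟩ := valid_mem hT.1 hef
  have hfe : s(f, e) ∈ T := by rwa [Sym2.eq_swap]
  -- the sum along the segment towards `e`
  have hsum : ∀ r : ℝ, t ≤ r → X ((1 - r) • f + r • e) + Y ((1 - r) • f + r • e) ≤ 1 := by
    intro r hr
    rw [hX, hY] at *
    nlinarith [mul_nonneg (sub_nonneg.2 hr) (sub_nonneg.2 hse)]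
  -- hitting a leg at an interior point is impossible
  have hleg : ∀ r : ℝ, t < r → r < 1 → 0 ≤ X ((1 - r) • f + r • e) →
      0 ≤ Y ((1 - r) • f + r • e) → X ((1 - r) • f + r • e) ≠ 0 ∧ Y ((1 - r) • f + r • e) ≠ 0 := by
    intro r hr0 hr1 hx hy
    have hs1 := hsum r hr0.le
    constructor
    · intro h0
      have hmem : (1 - r) • f + r • e ∈ segment ℝ o d := by
        rw [mem_seg_iff]
        refine ⟨Y ((1 - r) • f + r • e), hy, by linarith, ?_⟩
        apply inj
        · rw [h0, hX, Xo, Xd]; ring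
        · rw [hY _ _ (Y _), Yo, Yd]; ring
      have := valid_interior hT.1 hfe hod hne.symm (lt_of_le_of_lt t0 hr0) hr1 hmem
      rw [hX] at hXz
      rcases Sym2.eq_iff.1 this with ⟨rfl, rfl⟩ | ⟨rfl, rfl⟩ <;> simp [Xo, Xd] at hXz
    · intro h0
      have hmem : (1 - r) • f + r • e ∈ segment ℝ o c := by
        rw [mem_seg_iff]
        refine ⟨X ((1 - r) • f + r • e), hx, by linarith, ?_⟩
        apply inj
        · rw [hX _ _ (X _), Xo, Xc]; ring
        · rw [h0, hY, Yo, Yc]; ring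
      have := valid_interior hT.1 hfe hoc hne.symm (lt_of_le_of_lt t0 hr0) hr1 hmem
      rw [hY] at hYz
      rcases Sym2.eq_iff.1 this with ⟨rfl, rfl⟩ | ⟨rfl, rfl⟩ <;> simp [Yo, Yc] at hYz
  by_cases hin : 0 ≤ X e ∧ 0 ≤ Y e
  · refine hS e heS hin.1 hin.2 ?_
    have := hsum 1 t1.le
    simpa using this
  · exfalso
    -- parameters of first zero
    have hXz' := hXz
    have hYz' := hYz
    rw [hX] at hXz'
    rw [hY] at hYz'
    have hpar : ∀ F : Pt → ℝ, Aff F → 0 < F ((1 - t) • f + t • e) → F e < 0 →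
        ∃ r, t < r ∧ r < 1 ∧ F ((1 - r) • f + r • e) = 0 := by
      intro F hF h1 h2
      rw [hF] at h1
      have h3 : 0 < F f - F e := by nlinarith
      refine ⟨F f / (F f - F e), ?_, ?_, ?_⟩
      · rw [lt_div_iff₀ h3]; nlinarith
      · rw [div_lt_one h3]; linarith
      · rw [hF]; field_simp; ring
    have hpos : ∀ F : Pt → ℝ, Aff F → ∀ r r' : ℝ, t < r → r ≤ r' → 0 < F ((1 - t) • f + t • e) →
        0 ≤ F ((1 - r') • f + r' • e) → 0 ≤ F ((1 - r) • f + r • e) := by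
      intro F hF r r' h1 h2 h3 h4
      rw [hF] at *
      by_contra h5
      push Not at h5
      nlinarith [mul_nonneg (sub_nonneg.2 h1.le) h4, mul_nonneg (sub_nonneg.2 h2) h3.le,
        mul_pos (lt_of_lt_of_le (sub_pos.2 h1) (sub_le_sub_right h2 t)) (neg_pos.2 h5)]
    rcases lt_or_ge (X e) 0 with hxe | hxe
    · obtain ⟨r, r0, r1, hr⟩ := hpar X hX hXz hxe
      rcases le_or_gt 0 (Y ((1 - r) • f + r • e)) with hy | hy
      · exact (hleg r r0 r1 hr.ge hy).1 hr
      · have hye : Y e < 0 := by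
          by_contra h5
          push Not at h5
          have := hpos Y hY r 1 r0 r1.le hYz (by simpa using h5)
          linarith
        obtain ⟨r', r0', r1', hr'⟩ := hpar Y hY hYz hye
        have hrr : r' ≤ r := by
          by_contra h5
          push Not at h5
          have := hpos Y hY r r' r0 h5.le hYz hr'.ge
          linarith
        exact (hleg r' r0' r1' (hpos X hX r' r r0' hrr hXz hr.ge) hr'.ge).2 hr'
    · have hye : Y e < 0 := by
        by_contra h5
        push Not at h5
        exact hin ⟨hxe, h5⟩
      obtain ⟨r', r0', r1', hr'⟩ := hpar Y hY hYz hye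
      exact (hleg r' r0' r1' (hpos X hX r' 1 r0' r1'.le hXz (by simpa using hxe)) hr'.ge).2 hr'

lemma tri_of_legs {S : Finset Pt} {T : Set (Sym2 Pt)} (hT : IsTriangulation S T) {X Y : Pt → ℝ}
    (hX : Aff X) (hY : Aff Y) (inj : ∀ p q, X p = X q → Y p = Y q → p = q) {o c d : Pt}
    (hoc : s(o, c) ∈ T) (hod : s(o, d) ∈ T) (Xo : X o = 0) (Yo : Y o = 0) (Xc : X c = 1)
    (Yc : Y c = 0) (Xd : X d = 0) (Yd : Y d = 1)
    (hS : ∀ p ∈ S, 0 ≤ X p → 0 ≤ Y p → X p + Y p ≤ 1 → p = o ∨ p = c ∨ p = d)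
    (hray : ∀ f, s(o, f) ∈ T → 0 < X f → 0 < Y f → False) : IsTriangleOf S T o c d := by
  obtain ⟨hoS, hcS, hoc'⟩ := valid_mem hT.1 hoc
  obtain ⟨-, hdS, hod'⟩ := valid_mem hT.1 hod
  have hcd' : c ≠ d := by
    rintro rfl
    linarith
  -- an edge through a point of the triangle off the legs, ordered by the coordinate sum
  have main : ∀ e f, s(e, f) ∈ T → ∀ t : ℝ, 0 ≤ t → t ≤ 1 →
      0 < X ((1 - t) • f + t • e) → 0 < Y ((1 - t) • f + t • e) →
      X ((1 - t) • f + t • e) + Y ((1 - t) • f + t • e) ≤ 1 → X e + Y e ≤ X f + Y f →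
      (e = c ∨ e = d) ∧ (f = c ∨ f = d) := by
    intro e f hef t t0 t1 h1 h2 h3 h4
    obtain ⟨heS, hfS, hne⟩ := valid_mem hT.1 hef
    have ht1 : t < 1 := by
      rcases eq_or_lt_of_le t1 with rfl | h
      · exfalso
        simp only [sub_self, zero_smul, one_smul, zero_add] at h1 h2 h3
        rcases hS e heS h1.le h2.le h3 with rfl | rfl | rfl <;> linarith
      · exact h
    have he := tri_exit hT hX hY inj hoc hod Xo Yo Xc Yc Xd Yd hS hef t0 ht1 h1 h2 h3 h4
    have hn : e ≠ o := by
      rintro rfl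
      rw [hX, Xo] at h1
      rw [hY, Yo] at h2
      have h5 : 0 < 1 - t := by linarith
      exact hray f hef (by nlinarith) (by nlinarith)
    have he' : e = c ∨ e = d := by tauto
    have hse : X e + Y e = 1 := by
      rcases he' with rfl | rfl <;> linarith
    have hsf : X f + Y f = 1 := by
      rw [hX, hY] at h3
      nlinarith
    have ht0 : 0 < t := by
      rcases eq_or_lt_of_le t0 with rfl | h
      · exfalso
        simp only [sub_zero, zero_smul, one_smul, add_zero] at h1 h2 h3
        rcases hS f hfS h1.le h2.le h3 with rfl | rfl | rfl <;> linarith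
      · exact h
    have hsw : (1 - t) • f + t • e = (1 - (1 - t)) • e + (1 - t) • f := by module
    rw [hsw] at h1 h2 h3
    have hfe : s(f, e) ∈ T := by rwa [Sym2.eq_swap]
    have hf := tri_exit hT hX hY inj hoc hod Xo Yo Xc Yc Xd Yd hS hfe (t := 1 - t) (by linarith)
      (by linarith) h1 h2 h3 (by linarith)
    refine ⟨he', ?_⟩
    rcases hf with rfl | hf
    · linarith
    · exact hf
  have main' : ∀ e f, s(e, f) ∈ T → ∀ z ∈ segment ℝ e f, 0 < X z → 0 < Y z → X z + Y z ≤ 1 →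
      (e = c ∨ e = d) ∧ (f = c ∨ f = d) := by
    intro e f hef z hz h1 h2 h3
    rcases le_total (X e + Y e) (X f + Y f) with h | h
    · rw [segment_symm] at hz
      obtain ⟨t, t0, t1, rfl⟩ := mem_seg_iff.1 hz
      exact main e f hef t t0 t1 h1 h2 h3 h
    · obtain ⟨t, t0, t1, rfl⟩ := mem_seg_iff.1 hz
      exact (main f e (by rwa [Sym2.eq_swap]) t t0 t1 h1 h2 h3 h).symm
  have hcd : s(c, d) ∈ T := by
    apply tri_add hT hcS hdS hcd'
    rintro e f hef hne ⟨z, hz1, hz2, hz3⟩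
    obtain ⟨heS, hfS, hnef⟩ := valid_mem hT.1 hef
    obtain ⟨t, t0, t1, rfl⟩ := mem_seg_iff.1 hz1
    have hend : ∀ q, s(o, q) ∈ T → (q = c ∨ q = d) → (1 - t) • c + t • d = q → False := by
      intro q hq hqq hzq
      rw [hzq] at hz2 hz3
      have hqe : q ≠ e := fun h => hz3 ⟨hqq, Or.inl h⟩
      have hqf : q ≠ f := fun h => hz3 ⟨hqq, Or.inr h⟩
      obtain ⟨s, s0, s1, hs⟩ := mem_seg_iff.1 hz2
      have hs0 : 0 < s := by
        rcases eq_or_lt_of_le s0 with rfl | h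
        · simp at hs; exact absurd hs hqe
        · exact h
      have hs1 : s < 1 := by
        rcases eq_or_lt_of_le s1 with rfl | h
        · simp at hs; exact absurd hs hqf
        · exact h
      have := valid_interior hT.1 hef hq hnef hs0 hs1 (by rw [← hs]; exact right_mem_segment _ _ _)
      rcases Sym2.eq_iff.1 this with ⟨h1, h2⟩ | ⟨h1, h2⟩
      · exact hqf h2.symm
      · exact hqe h1.symm
    have ht0 : 0 < t := by
      rcases eq_or_lt_of_le t0 with rfl | h
      · exact (hend c hoc (Or.inl rfl) (by simp)).elim
      · exact h
    have ht1 : t < 1 := by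
      rcases eq_or_lt_of_le t1 with rfl | h
      · exact (hend d hod (Or.inr rfl) (by simp)).elim
      · exact h
    have := main' e f hef _ hz2 (by rw [hX, Xc, Xd]; linarith) (by rw [hY, Yc, Yd]; linarith)
      (by rw [hX, hY, Xc, Xd, Yc, Yd]; linarith)
    obtain ⟨rfl | rfl, rfl | rfl⟩ := this
    · exact hnef rfl
    · exact hne rfl
    · exact hne Sym2.eq_swap
    · exact hnef rfl
  have hopen : ∀ x ∈ openTriangle o c d, 0 < X x ∧ 0 < Y x ∧ X x + Y x < 1 := by
    intro x hx
    refine ⟨openTriangle_pos hX (w := c) (by linarith) (by linarith) (by linarith) (by linarith) hx,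
      openTriangle_pos hY (w := d) (by linarith) (by linarith) (by linarith) (by linarith) hx, ?_⟩
    have hZ : Aff (fun p => 1 - X p - Y p) := by
      intro p q s
      simp only [hX p q s, hY p q s]
      ring
    have := openTriangle_pos hZ (w := o) (a := o) (b := c) (c := d) (by linarith)
      (by linarith) (by linarith) (by linarith) hx
    linarith
  refine ⟨hoS, hcS, hdS, hoc', hcd', hod', hoc, hcd, hod, ?_, ?_⟩
  · intro p hp hpo
    obtain ⟨h1, h2, h3⟩ := hopen p hpo
    rcases hS p hp h1.le h2.le h3.le with rfl | rfl | rfl <;> linarith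
  · intro u v huv x hx hxo
    obtain ⟨h1, h2, h3⟩ := hopen x hxo
    obtain ⟨hu, hv⟩ := main' u v huv x hx h1 h2 h3.le
    obtain ⟨s, s0, s1, rfl⟩ := mem_seg_iff.1 hx
    rw [hX, hY] at h3
    have hu1 : X u + Y u = 1 := by rcases hu with rfl | rfl <;> linarith
    have hv1 : X v + Y v = 1 := by rcases hv with rfl | rfl <;> linarith
    nlinarith

/-! ### The half lemma: the first visible point on one side of a ray -/

set_option maxHeartbeats 2000000 in
lemma half_lemma {S : Finset Pt} {T : Set (Sym2 Pt)} (hT : IsTriangulation S T) {X Y h : Pt → ℝ}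
    (hX : Aff X) (hY : Aff Y) (hh : Aff h) (inj : ∀ p q, X p = X q → Y p = Y q → p = q) {o u : Pt}
    (hoS : o ∈ S) (Xo : X o = 0) (Yo : Y o = 0) (ho : 0 < h o)
    (hax : ∀ p ∈ S, Y p = 0 → p ≠ o → X p < 0)
    (hcol : ∀ p ∈ S, ∀ q ∈ S, Y p ≠ 0 → Y q ≠ 0 → X p * Y q = X q * Y p → p = q)
    (huS : u ∈ S) (Yu : 0 < Y u) (hu : 0 ≤ h u)
    (hmin : ∀ e f, s(e, f) ∈ T → Y e < 0 → 0 < Y f → ∀ w ∈ segment ℝ e f, Y w = 0 → 0 < X w →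
      h w ≤ 0)
    (hbar : ∀ e f, s(e, f) ∈ T → ∀ t : ℝ, 0 < t → t < 1 → h ((1 - t) • e + t • f) = 0 →
      0 ≤ Y ((1 - t) • e + t • f) →
      X u * Y ((1 - t) • e + t • f) ≤ X ((1 - t) • e + t • f) * Y u → h e = 0 ∧ h f = 0)
    (hline : ∀ p ∈ S, 0 < Y p → h p = 0 → p = u) :
    ∃ c ∈ S, 0 < Y c ∧ 0 ≤ h c ∧ X u * Y c ≤ X c * Y u ∧ s(o, c) ∈ T ∧
      (∀ p ∈ S, 0 < Y p → X c * Y p < X p * Y c → h p < 0) ∧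
      (∀ f, s(o, f) ∈ T → 0 < Y f → X c * Y f < X f * Y c → False) := by
  classical
  obtain ⟨c, hcL, hcmax⟩ := Finset.exists_max_image
    (S.filter (fun p => 0 < Y p ∧ 0 ≤ h p ∧ X u * Y p ≤ X p * Y u)) (fun p => X p / Y p)
    ⟨u, by simp [huS, Yu, hu]⟩
  rw [Finset.mem_filter] at hcL
  obtain ⟨hcS, Yc, hc, hcu⟩ := hcL
  have htrans : ∀ x : Pt, 0 ≤ Y x → X c * Y x ≤ X x * Y c → X u * Y x ≤ X x * Y u := by
    intro x hx1 hx2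
    have h1 := mul_le_mul_of_nonneg_right hx2 Yu.le
    have h2 := mul_le_mul_of_nonneg_right hcu hx1
    have h3 : (X u * Y x) * Y c ≤ (X x * Y u) * Y c := by nlinarith
    exact le_of_mul_le_mul_right h3 Yc
  have hout : ∀ p ∈ S, 0 < Y p → X c * Y p < X p * Y c → h p < 0 := by
    intro p hp hYp hlt
    by_contra hneg
    push Not at hneg
    have := hcmax p (Finset.mem_filter.2 ⟨hp, hYp, hneg, htrans p hYp.le hlt.le⟩)
    rw [div_le_div_iff₀ hYp Yc] at this
    linarith
  refine ⟨c, hcS, Yc, hc, hcu, ?_, hout, ?_⟩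
  · have hoc : o ≠ c := by
      rintro rfl
      linarith
    apply tri_add hT hoS hcS hoc
    rintro e₀ f₀ hef₀ hne₀ ⟨z, hz1, hz2, hz3⟩
    have hg : Aff (fun p => X p * Y c - X c * Y p) := by
      intro p q s
      simp only [hX p q s, hY p q s]
      ring
    obtain ⟨r, r0, r1, hr⟩ := mem_seg_iff.1 hz1
    have Xz : X z = r * X c := by rw [hr, hX, Xo]; ring
    have Yz : Y z = r * Y c := by rw [hr, hY, Yo]; ring
    have hz : h z = (1 - r) * h o + r * h c := by rw [hr, hh]
    have hz0 : 0 ≤ h z := by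
      rw [hz]
      exact add_nonneg (mul_nonneg (by linarith) ho.le) (mul_nonneg r0 hc)
    have hSz : z ∈ S → z = o ∨ z = c := by
      intro hzS
      rcases eq_or_lt_of_le r0 with h0 | h0
      · left
        rw [hr, ← h0]; simp
      · right
        apply hcol z hzS c hcS _ Yc.ne'
        · rw [Xz, Yz]; ring
        · rw [Yz]; positivity
    -- symmetric formulation
    have core : ∀ e f, s(e, f) ∈ T → s(e, f) ≠ s(o, c) → z ≠ e → z ≠ f → z ∈ segment ℝ e f →
        0 ≤ X e * Y c - X c * Y e → False := by
      intro e f hef hne hze hzf hzs hge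
      obtain ⟨heS, hfS, hnef⟩ := valid_mem hT.1 hef
      obtain ⟨t, t0, t1, ht⟩ := mem_seg_iff.1 hzs
      have t0' : 0 < t := by
        rcases eq_or_lt_of_le t0 with rfl | h
        · simp at ht; exact absurd ht hze
        · exact h
      have t1' : t < 1 := by
        rcases eq_or_lt_of_le t1 with rfl | h
        · simp at ht; exact absurd ht hzf
        · exact h
      have hgz : (1 - t) * (X e * Y c - X c * Y e) + t * (X f * Y c - X c * Y f) = 0 := by
        have := hg e f t
        simp only [← ht] at this
        rw [← this, Xz, Yz]; ring
      have hYz : (1 - t) * Y e + t * Y f = r * Y c := by rw [← Yz, ht, hY]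
      have hXz : (1 - t) * X e + t * X f = r * X c := by rw [← Xz, ht, hX]
      have hzero : ∀ p ∈ S, X p * Y c - X c * Y p = 0 → p = o ∨ p = c := by
        intro p hp hg0
        by_cases hYp : Y p = 0
        · left
          by_contra hpo
          have := hax p hp hYp hpo
          rw [hYp] at hg0
          nlinarith
        · right
          exact hcol p hp c hcS hYp Yc.ne' (by linarith)
      have hsub : ∀ s : ℝ, (1 - s) • z + s • e = (1 - (1 - s) * t) • e + ((1 - s) * t) • f := by
        intro s
        rw [ht]; module
      rcases eq_or_lt_of_le hge with hge0 | hgpos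
      · have hgf : X f * Y c - X c * Y f = 0 := by
          rw [← hge0] at hgz
          have : t * (X f * Y c - X c * Y f) = 0 := by linarith
          rcases mul_eq_zero.1 this with h | h
          · linarith
          · exact h
        rcases hzero e heS hge0.symm with rfl | rfl <;> rcases hzero f hfS hgf with rfl | rfl
        · exact hnef rfl
        · exact hne rfl
        · exact hne Sym2.eq_swap
        · exact hnef rfl
      · have heo : e ≠ o := by
          rintro rfl
          rw [Xo, Yo] at hgpos
          linarith
        have hYe : Y e ≠ 0 := by
          intro h0
          have := hax e heS h0 heo
          rw [h0] at hgpos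
          nlinarith
        have hr0 : 0 < r := by
          rcases eq_or_lt_of_le r0 with h0 | h0
          · exfalso
            rw [← h0, zero_mul] at hYz hXz
            have hYf : Y f ≠ 0 := by
              intro h1
              rw [h1] at hYz
              have : (1 - t) * Y e = 0 := by linarith
              rcases mul_eq_zero.1 this with h | h
              · linarith
              · exact hYe h
            apply hnef
            apply hcol e heS f hfS hYe hYf
            have h2 : t * (X e * Y f - X f * Y e) = 0 := by
              linear_combination X e * hYz - Y e * hXz
            rcases mul_eq_zero.1 h2 with h | h
            · linarith
            · linarith
          · exact h0
        have hYzpos : 0 < Y z := by rw [Yz]; positivity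
        have hgz0 : X z * Y c - X c * Y z = 0 := by rw [Xz, Yz]; ring
        rcases lt_or_gt_of_ne hYe with hneg | hpos
        · have hYf : 0 < Y f := by
            by_contra h0
            push Not at h0
            have : 0 < r * Y c := by positivity
            nlinarith
          obtain ⟨s, s0, s1, hs⟩ := zero_between hY hYzpos.le hneg.le
          have s1' : s < 1 := by
            rcases eq_or_lt_of_le s1 with rfl | h
            · simp at hs; linarith
            · exact h
          have s0' : 0 < s := by
            rcases eq_or_lt_of_le s0 with rfl | h
            · simp at hs; linarith
            · exact h
          set w := (1 - s) • z + s • e with hw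
          have hgw : 0 < X w * Y c - X c * Y w := by
            have := hg z e s
            simp only [← hw] at this
            rw [this, hgz0]
            have := mul_pos s0' hgpos
            linarith
          have hXw : 0 < X w := by
            rw [hs] at hgw
            by_contra h0
            push Not at h0
            nlinarith
          have hwseg : w ∈ segment ℝ e f := by
            rw [hw, hsub, mem_seg_iff]
            refine ⟨(1 - s) * t, ?_, ?_, rfl⟩
            · exact mul_nonneg (by linarith) t0
            · exact (lt_of_le_of_lt (mul_le_of_le_one_left t0 (by linarith)) t1').le
          have hhw := hmin e f hef hneg hYf w hwseg hs hXw
          obtain ⟨s', s0'', s1'', hs'⟩ := zero_between hh hz0 hhw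
          have hx : (1 - s') • z + s' • w = (1 - s' * s) • z + (s' * s) • e := by
            rw [hw]; module
          have hss : s' * s < 1 := lt_of_le_of_lt (mul_le_of_le_one_left s0 s1'') s1'
          have hss0 : 0 ≤ s' * s := mul_nonneg s0'' s0
          have hYx : 0 ≤ Y ((1 - s') • z + s' • w) := by
            rw [hY, hs]
            have := mul_nonneg (by linarith : 0 ≤ 1 - s') hYzpos.le
            linarith
          have hgx : X c * Y ((1 - s') • z + s' • w) ≤ X ((1 - s') • z + s' • w) * Y c := by
            have := hg z w s'
            simp only at this
            have h3 := mul_nonneg s0'' hgw.le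
            rw [hgz0] at this
            linarith
          have hux := htrans _ hYx hgx
          rw [hx, hsub] at hs' hYx hux
          have hb := hbar e f hef _ (mul_pos (by linarith) t0')
            (lt_of_le_of_lt (mul_le_of_le_one_left t0 (by linarith)) t1') hs' hYx hux
          have hfu := hline f hfS hYf hb.2
          have hz00 : h z = 0 := by rw [ht, hh, hb.1, hb.2]; ring
          rw [hz] at hz00
          have hr1 : r = 1 := by
            by_contra hr1
            have : r < 1 := lt_of_le_of_ne r1 hr1
            have h1 := mul_pos (by linarith : 0 < 1 - r) ho
            have h2 := mul_nonneg r0 hc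
            linarith
          rw [hr1] at hz00 hr
          have hcu' := hline c hcS Yc (by linarith)
          apply hzf
          rw [hr, hfu, hcu']; simp
        · have hhe := hout e heS hpos (by linarith)
          obtain ⟨s, s0, s1, hs⟩ := zero_between hh hz0 hhe.le
          have s1' : s < 1 := by
            rcases eq_or_lt_of_le s1 with rfl | h
            · simp at hs; linarith
            · exact h
          have hYx : 0 ≤ Y ((1 - s) • z + s • e) := by
            rw [hY]
            exact add_nonneg (mul_nonneg (by linarith) hYzpos.le) (mul_nonneg s0 hpos.le)
          have hgx : X c * Y ((1 - s) • z + s • e) ≤ X ((1 - s) • z + s • e) * Y c := by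
            have := hg z e s
            simp only at this
            have h3 := mul_nonneg s0 hgpos.le
            rw [hgz0] at this
            linarith
          have hux := htrans _ hYx hgx
          rw [hsub] at hs hYx hux
          have hb := hbar e f hef _ (mul_pos (by linarith) t0')
            (lt_of_le_of_lt (mul_le_of_le_one_left t0 (by linarith)) t1') hs hYx hux
          linarith [hb.1]
    obtain ⟨heS, hfS, hnef⟩ := valid_mem hT.1 hef₀
    have hze : z ≠ e₀ := by
      intro h
      have h2 := hSz (h ▸ heS)
      exact hz3 ⟨h2, Or.inl h⟩
    have hzf : z ≠ f₀ := by
      intro h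
      have h2 := hSz (h ▸ hfS)
      exact hz3 ⟨h2, Or.inr h⟩
    rcases le_or_gt 0 (X e₀ * Y c - X c * Y e₀) with hge | hlt
    · exact core e₀ f₀ hef₀ hne₀ hze hzf hz2 hge
    · refine core f₀ e₀ (by rwa [Sym2.eq_swap]) (by rwa [Sym2.eq_swap]) hzf hze
        (by rwa [segment_symm]) ?_
      obtain ⟨t, t0, t1, ht⟩ := mem_seg_iff.1 hz2
      have := hg e₀ f₀ t
      simp only [← ht] at this
      rw [Xz, Yz] at this
      by_contra h0
      push Not at h0
      have t0' : 0 < t := by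
        rcases eq_or_lt_of_le t0 with rfl | h
        · simp at ht; exact absurd ht hze
        · exact h
      nlinarith [mul_pos t0' (neg_pos.2 h0), mul_nonneg (sub_nonneg.2 t1) (neg_nonneg.2 hlt.le)]
  · intro f hf hYf hgf
    obtain ⟨-, hfS, hnof⟩ := valid_mem hT.1 hf
    have hhf := hout f hfS hYf hgf
    obtain ⟨s, s0, s1, hs⟩ := zero_between hh ho.le hhf.le
    have s1' : s < 1 := by
      rcases eq_or_lt_of_le s1 with rfl | h
      · simp at hs; linarith
      · exact h
    have s0' : 0 < s := by
      rcases eq_or_lt_of_le s0 with rfl | h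
      · simp at hs; linarith
      · exact h
    have hYx : 0 ≤ Y ((1 - s) • o + s • f) := by
      rw [hY, Yo]
      have := mul_nonneg s0 hYf.le
      linarith
    have hgx : X c * Y ((1 - s) • o + s • f) ≤ X ((1 - s) • o + s • f) * Y c := by
      rw [hX, hY, Xo, Yo]
      nlinarith
    have hb := hbar o f hf s s0' s1' hs hYx (htrans _ hYx hgx)
    linarith [hb.1]

/-! ### The triangle around the ray opposite to the extra point -/

/-- Choice of the two starting points and of the barrier. -/
lemma barrier {S : Finset Pt} {T : Set (Sym2 Pt)} (hT : IsTriangulation S T) {X Y : Pt → ℝ}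
    (hX : Aff X) (hY : Aff Y) (inj : ∀ p q, X p = X q → Y p = Y q → p = q) {o : Pt}
    (Xo : X o = 0)
    (hax : ∀ p ∈ S, Y p = 0 → p ≠ o → X p < 0)
    (hgp : ∀ p ∈ S, ∀ q ∈ S, ∀ r ∈ S, Y p ≠ 0 → Y q ≠ 0 → Y r ≠ 0 → p ≠ q →
      (Y q - Y p) * (X r - X p) = (X q - X p) * (Y r - Y p) → r = p ∨ r = q)
    (hcone : ∀ A B : ℝ, (A ≠ 0 ∨ B ≠ 0) → ∃ p ∈ S, 0 < A * X p + B * Y p) :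
    ∃ u ∈ S, ∃ v ∈ S, ∃ A B C : ℝ, 0 < Y u ∧ Y v < 0 ∧ 0 < X v * Y u - X u * Y v ∧ 0 < A ∧
      0 ≤ A + B * X u + C * Y u ∧ 0 ≤ A + B * X v + C * Y v ∧
      (∀ e f, s(e, f) ∈ T → Y e < 0 → 0 < Y f → ∀ w ∈ segment ℝ e f, Y w = 0 → 0 < X w →
        A + B * X w + C * Y w ≤ 0) ∧
      (∀ e f, s(e, f) ∈ T → ∀ t : ℝ, 0 < t → t < 1 → ∀ x, x = (1 - t) • e + t • f →
        A + B * X x + C * Y x = 0 →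
        (0 ≤ Y x ∧ X u * Y x ≤ X x * Y u) ∨ (Y x ≤ 0 ∧ X v * (- Y x) ≤ X x * (- Y v)) →
        A + B * X e + C * Y e = 0 ∧ A + B * X f + C * Y f = 0) ∧
      (∀ p ∈ S, Y p ≠ 0 → A + B * X p + C * Y p = 0 → p = u ∨ p = v) := by
  classical
  by_cases hE : ∃ u v, s(u, v) ∈ T ∧ 0 < Y u ∧ Y v < 0 ∧ 0 < X v * Y u - X u * Y v
  · obtain ⟨u₀, v₀, he₀, hu₀, hv₀, hN₀⟩ := hE
    obtain ⟨hu₀S, hv₀S, -⟩ := valid_mem hT.1 he₀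
    obtain ⟨⟨u, v⟩, huv, hmin⟩ := Finset.exists_min_image
      ((S ×ˢ S).filter (fun p => s(p.1, p.2) ∈ T ∧ 0 < Y p.1 ∧ Y p.2 < 0 ∧
        0 < X p.2 * Y p.1 - X p.1 * Y p.2))
      (fun p => (X p.2 * Y p.1 - X p.1 * Y p.2) / (Y p.1 - Y p.2))
      ⟨(u₀, v₀), by simp [hu₀S, hv₀S, he₀, hu₀, hv₀]; linarith⟩
    rw [Finset.mem_filter, Finset.mem_product] at huv
    obtain ⟨⟨huS, hvS⟩, he, hu, hv, hN⟩ := huv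
    simp only at huS hvS he hu hv hN
    have hd : 0 < Y u - Y v := by linarith
    have huv' : u ≠ v := by
      rintro rfl
      linarith
    refine ⟨u, huS, v, hvS, X v * Y u - X u * Y v, Y v - Y u, - (X v - X u), hu, hv, hN, hN,
      by nlinarith, by nlinarith, ?_, ?_, ?_⟩
    · intro e f hef hYe hYf w hw hYw hXw
      obtain ⟨heS, hfS, -⟩ := valid_mem hT.1 hef
      obtain ⟨s, s0, s1, rfl⟩ := mem_seg_iff.1 hw
      rw [hY] at hYw
      have hd2 : 0 < Y f - Y e := by linarith
      have hXe : X ((1 - s) • e + s • f) * (Y f - Y e) = X e * Y f - X f * Y e := by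
        rw [hX]
        linear_combination (X f - X e) * hYw
      have hN2 : 0 < X e * Y f - X f * Y e := by rw [← hXe]; positivity
      have := hmin (f, e) (by
        simp only [Finset.mem_filter, Finset.mem_product]
        exact ⟨⟨hfS, heS⟩, by rwa [Sym2.eq_swap], hYf, hYe, hN2⟩)
      simp only at this
      rw [← hXe, mul_div_cancel_right₀ _ hd2.ne', div_le_iff₀ hd] at this
      rw [hY, hYw]
      linarith
    · intro e f hef t t0 t1 x hx hh hor
      obtain ⟨heS, hfS, hnef⟩ := valid_mem hT.1 hef
      have hb : Y v ≤ Y x ∧ Y x ≤ Y u := by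
        rcases hor with ⟨h1, h2⟩ | ⟨h1, h2⟩
        · refine ⟨by linarith, ?_⟩
          have h3 := mul_le_mul_of_nonneg_left h2 hd.le
          have h4 : 0 ≤ (X v * Y u - X u * Y v) * (Y u - Y x) := by
            have : (X v * Y u - X u * Y v) * (Y u - Y x) =
              (Y u - Y v) * (X x * Y u) - (Y u - Y v) * (X u * Y x) := by
              linear_combination Y u * hh
            linarith
          have := nonneg_of_mul_nonneg_right h4 hN
          linarith
        · refine ⟨?_, by linarith⟩
          have h3 := mul_le_mul_of_nonneg_left h2 hd.le
          have h4 : 0 ≤ (X v * Y u - X u * Y v) * (Y x - Y v) := by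
            have : (X v * Y u - X u * Y v) * (Y x - Y v) =
              (Y u - Y v) * (X x * (- Y v)) - (Y u - Y v) * (X v * (- Y x)) := by
              linear_combination (- Y v) * hh
            linarith
          have := nonneg_of_mul_nonneg_right h4 hN
          linarith
      have hmem : x ∈ segment ℝ u v := by
        rw [mem_seg_iff]
        refine ⟨(Y u - Y x) / (Y u - Y v), div_nonneg (by linarith) hd.le,
          (div_le_one hd).2 (by linarith), ?_⟩
        apply inj
        · rw [hX]
          field_simp
          linear_combination -hh
        · rw [hY]
          field_simp
          ring
      rw [hx] at hmem
      have := valid_interior hT.1 hef he hnef t0 t1 hmem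
      rcases Sym2.eq_iff.1 this with ⟨rfl, rfl⟩ | ⟨rfl, rfl⟩
      · constructor <;> ring
      · constructor <;> ring
    · intro p hp hYp hh
      exact hgp u huS v hvS p hp hu.ne' hv.ne hYp huv' (by linear_combination hh)
  · obtain ⟨q, hqS, hq⟩ := hcone 0 1 (Or.inr one_ne_zero)
    obtain ⟨u, huF, humax⟩ := Finset.exists_max_image (S.filter (fun p => 0 < Y p))
      (fun p => X p / Y p) ⟨q, by rw [Finset.mem_filter]; exact ⟨hqS, by linarith⟩⟩
    rw [Finset.mem_filter] at huF
    obtain ⟨huS, hu⟩ := huF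
    obtain ⟨v, hvS, hv⟩ := hcone (Y u) (- X u) (Or.inl hu.ne')
    have hYv : Y v < 0 := by
      rcases lt_trichotomy (Y v) 0 with h | h | h
      · exact h
      · exfalso
        rw [h] at hv
        by_cases hvo : v = o
        · rw [hvo, Xo] at hv; linarith
        · have := hax v hvS h hvo
          nlinarith
      · exfalso
        have := humax v (Finset.mem_filter.2 ⟨hvS, h⟩)
        rw [div_le_div_iff₀ h hu] at this
        linarith
    refine ⟨u, huS, v, hvS, 1, 0, 0, hu, hYv, by linarith, one_pos, by norm_num, by norm_num,
      ?_, ?_, ?_⟩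
    · intro e f hef hYe hYf w hw hYw hXw
      exfalso
      apply hE
      refine ⟨f, e, by rwa [Sym2.eq_swap], hYf, hYe, ?_⟩
      obtain ⟨s, s0, s1, rfl⟩ := mem_seg_iff.1 hw
      rw [hY] at hYw
      have hd2 : 0 < Y f - Y e := by linarith
      have hXe : X ((1 - s) • e + s • f) * (Y f - Y e) = X e * Y f - X f * Y e := by
        rw [hX]
        linear_combination (X f - X e) * hYw
      rw [← hXe]; positivity
    · intro e f hef t t0 t1 x hx hh hor
      norm_num at hh
    · intro p hp hYp hh
      norm_num at hh

lemma frame_core {S : Finset Pt} {T : Set (Sym2 Pt)} (hT : IsTriangulation S T) {X Y : Pt → ℝ}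
    (hX : Aff X) (hY : Aff Y) (inj : ∀ p q, X p = X q → Y p = Y q → p = q) {o : Pt}
    (hoS : o ∈ S) (Xo : X o = 0) (Yo : Y o = 0)
    (hax : ∀ p ∈ S, Y p = 0 → p ≠ o → X p < 0)
    (hcol : ∀ p ∈ S, ∀ q ∈ S, Y p ≠ 0 → Y q ≠ 0 → X p * Y q = X q * Y p → p = q)
    (hgp : ∀ p ∈ S, ∀ q ∈ S, ∀ r ∈ S, Y p ≠ 0 → Y q ≠ 0 → Y r ≠ 0 → p ≠ q →
      (Y q - Y p) * (X r - X p) = (X q - X p) * (Y r - Y p) → r = p ∨ r = q)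
    (hcone : ∀ A B : ℝ, (A ≠ 0 ∨ B ≠ 0) → ∃ p ∈ S, 0 < A * X p + B * Y p) :
    ∃ c d, c ∈ S ∧ d ∈ S ∧ 0 < Y c ∧ Y d < 0 ∧ X c * Y d - Y c * X d < 0 ∧
      IsTriangleOf S T o c d := by
  obtain ⟨u, huS, v, hvS, A, B, C, hu, hv, hN, hA, hhu, hhv, hmin, hbar, hline⟩ :=
    barrier hT hX hY inj Xo hax hgp hcone
  have hh : Aff (fun p => A + B * X p + C * Y p) := by
    intro p q s
    simp only [hX p q s, hY p q s]
    ring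
  have hY' : Aff (fun p => - Y p) := by
    intro p q s
    simp only [hY p q s]
    ring
  obtain ⟨c, hcS, Yc, hc, hcu, hoc, hc1, hc2⟩ := half_lemma hT hX hY hh inj hoS Xo Yo
    (by simp only [Xo, Yo]; linarith) hax hcol huS hu hhu hmin
    (fun e f hef t t0 t1 h1 h2 h3 => hbar e f hef t t0 t1 _ rfl h1 (Or.inl ⟨h2, h3⟩))
    (fun p hp h1 h2 => by
      rcases hline p hp h1.ne' h2 with h | h
      · exact h
      · rw [h] at h1; linarith)
  obtain ⟨d, hdS, Yd, hd, hdv, hod, hd1, hd2⟩ := half_lemma hT hX hY' hh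
    (fun p q h1 h2 => inj p q h1 (by linarith)) hoS Xo (by simp only [Yo]; norm_num)
    (by simp only [Xo, Yo]; linarith) (fun p hp h1 h2 => hax p hp (by linarith) h2)
    (fun p hp q hq h1 h2 h3 => hcol p hp q hq (fun h => h1 (by rw [h]; norm_num))
      (fun h => h2 (by rw [h]; norm_num)) (by linarith)) hvS (by linarith) hhv
    (fun e f hef h1 h2 w hw h3 h4 => hmin f e (by rwa [Sym2.eq_swap]) (by linarith) (by linarith)
      w (by rwa [segment_symm]) (by linarith) h4)
    (fun e f hef t t0 t1 h1 h2 h3 => hbar e f hef t t0 t1 _ rfl h1 (Or.inr ⟨by linarith, h3⟩))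
    (fun p hp h1 h2 => by
      rcases hline p hp (by intro h; linarith) h2 with h | h
      · rw [h] at h1; linarith
      · exact h)
  have Yd' : Y d < 0 := by linarith
  have hD : X c * Y d - Y c * X d < 0 := by
    have h1 : 0 < (X v * Y u - X u * Y v) * (Y c * (- Y d)) := by
      apply mul_pos hN (mul_pos Yc Yd)
    have h2 := mul_le_mul_of_nonneg_right hcu (mul_pos (neg_pos.2 hv) Yd).le
    have h3 := mul_le_mul_of_nonneg_right hdv (mul_pos hu Yc).le
    have h4 : 0 < (Y c * X d - X c * Y d) * (Y u * (- Y v)) := by nlinarith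
    have := (pos_iff_pos_of_mul_pos h4).2 (mul_pos hu (neg_pos.2 hv))
    linarith
  refine ⟨c, d, hcS, hdS, Yc, Yd', hD, ?_⟩
  set D := X c * Y d - Y c * X d with hDdef
  have hD0 : D ≠ 0 := hD.ne
  have hbX : ∀ p, (X p * Y d - Y p * X d) / D * X c + (X c * Y p - Y c * X p) / D * X d = X p := by
    intro p
    field_simp
    rw [hDdef]; ring
  have hbY : ∀ p, (X p * Y d - Y p * X d) / D * Y c + (X c * Y p - Y c * X p) / D * Y d = Y p := by
    intro p
    field_simp
    rw [hDdef]; ring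
  refine tri_of_legs hT (X := fun p => (X p * Y d - Y p * X d) / D)
    (Y := fun p => (X c * Y p - Y c * X p) / D) ?_ ?_ ?_ hoc hod ?_ ?_ ?_ ?_ ?_ ?_ ?_ ?_
  · intro p q s
    simp only [hX p q s, hY p q s]
    ring
  · intro p q s
    simp only [hX p q s, hY p q s]
    ring
  · intro p q h1 h2
    apply inj
    · rw [← hbX p, ← hbX q, h1, h2]
    · rw [← hbY p, ← hbY q, h1, h2]
  · simp [Xo, Yo]
  · simp [Xo, Yo]
  · exact div_self hD0
  · rw [mul_comm (Y c), sub_self, zero_div]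
  · rw [mul_comm (Y d), sub_self, zero_div]
  · exact div_self hD0
  · intro p hp hb hg hbg
    set β := (X p * Y d - Y p * X d) / D with hβ
    set γ := (X c * Y p - Y c * X p) / D with hγ
    have hβD : β * D = X p * Y d - Y p * X d := div_mul_cancel₀ _ hD0
    have hγD : γ * D = X c * Y p - Y c * X p := div_mul_cancel₀ _ hD0
    have hhp : 0 ≤ A + B * X p + C * Y p := by
      have : A + B * X p + C * Y p = (1 - β - γ) * A + β * (A + B * X c + C * Y c) +
          γ * (A + B * X d + C * Y d) := by
        rw [← hbX p, ← hbY p]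
        ring
      rw [this]
      have h1 := mul_nonneg (by linarith : 0 ≤ 1 - β - γ) hA.le
      have h2 := mul_nonneg hb hc
      have h3 := mul_nonneg hg hd
      linarith
    have hβn : β * D ≤ 0 := mul_nonpos_of_nonneg_of_nonpos hb hD.le
    have hγn : γ * D ≤ 0 := mul_nonpos_of_nonneg_of_nonpos hg hD.le
    rcases lt_trichotomy (Y p) 0 with hYp | hYp | hYp
    · right; right
      by_cases h0 : X p * Y d = X d * Y p
      · exact hcol p hp d hdS hYp.ne Yd'.ne h0
      · exfalso
        have : X p * Y d < X d * Y p := lt_of_le_of_ne (by linarith) h0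
        have := hd1 p hp (by linarith) (by linarith)
        linarith
    · left
      by_contra hpo
      have := hax p hp hYp hpo
      rw [hYp] at hγD
      nlinarith
    · right; left
      by_cases h0 : X p * Y c = X c * Y p
      · exact hcol p hp c hcS hYp.ne' Yc.ne' h0
      · exfalso
        have : X c * Y p < X p * Y c := lt_of_le_of_ne (by linarith) (Ne.symm h0)
        have := hc1 p hp (by linarith) (by linarith)
        linarith
  · intro f hf hb hg
    obtain ⟨-, hfS, hof⟩ := valid_mem hT.1 hf
    have hb' := mul_neg_of_pos_of_neg hb hD
    have hg' := mul_neg_of_pos_of_neg hg hD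
    rw [div_mul_cancel₀ _ hD0] at hb' hg'
    rcases lt_trichotomy (Y f) 0 with hYp | hYp | hYp
    · exact hd2 f hf (by linarith) (by linarith)
    · have := hax f hfS hYp hof.symm
      rw [hYp] at hg'
      nlinarith
    · exact hc2 f hf (by linarith) (by linarith)

/-! ### The main lemma on one extra point -/

lemma core_clockwise {P S : Finset Pt} {T : Set (Sym2 Pt)} (hT : IsTriangulation S T)
    (hPS : P ⊆ S) {i a : Pt} (hSa : ∀ p ∈ S, p ∈ P ∨ p = a) (hi : i ∈ P) (hai : a ≠ i)
    (gp : ∀ p ∈ P, ∀ q ∈ P, ∀ r ∈ P, det2 (q - p) (r - p) = 0 → p = q ∨ q = r ∨ p = r)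
    (hcone : ∀ A B : ℝ, (A ≠ 0 ∨ B ≠ 0) → ∃ p ∈ P, 0 < A * (p.1 - i.1) + B * (p.2 - i.2))
    (hna : ∀ p ∈ P, ∀ s : ℝ, 0 < s → a.1 = i.1 + s * (i.1 - p.1) →
      a.2 = i.2 + s * (i.2 - p.2) → False) :
    ∃ c d, c ∈ P ∧ d ∈ P ∧ IsTriangleOf S T i c d ∧ Clockwise i c d := by
  obtain ⟨i1, i2⟩ := i
  obtain ⟨a1, a2⟩ := a
  simp only at hcone hna
  obtain ⟨k, hk⟩ : ∃ k, k = i1 - a1 := ⟨_, rfl⟩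
  obtain ⟨l, hl⟩ : ∃ l, l = i2 - a2 := ⟨_, rfl⟩
  have hkl : 0 < k ^ 2 + l ^ 2 := by
    rcases eq_or_ne k 0 with h1 | h1
    · rcases eq_or_ne l 0 with h2 | h2
      · exfalso
        apply hai
        ext <;> simp only <;> linarith
      · positivity
    · positivity
  have hinj : ∀ x y x' y' : ℝ, k * x + l * y = k * x' + l * y' → k * y - l * x = k * y' - l * x' →
      x = x' ∧ y = y' := by
    intro x y x' y' h1 h2
    constructor
    · have : (k ^ 2 + l ^ 2) * (x - x') = 0 := by linear_combination k * h1 - l * h2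
      rcases mul_eq_zero.1 this with h | h <;> linarith
    · have : (k ^ 2 + l ^ 2) * (y - y') = 0 := by linear_combination l * h1 + k * h2
      rcases mul_eq_zero.1 this with h | h <;> linarith
  have hP : ∀ p ∈ S, k * (p.2 - i2) - l * (p.1 - i1) ≠ 0 → p ∈ P := by
    intro p hp h
    rcases hSa p hp with h1 | rfl
    · exact h1
    · exfalso
      apply h
      rw [hk, hl]; simp only; ring
  obtain ⟨c, d, hc, hd, Yc, Yd, hD, htri⟩ := frame_core hT
    (X := fun p => k * (p.1 - i1) + l * (p.2 - i2))
    (Y := fun p => k * (p.2 - i2) - l * (p.1 - i1)) (o := (i1, i2))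
    (by intro p q s; simp; ring) (by intro p q s; simp; ring)
    (by
      intro p q h1 h2
      obtain ⟨h3, h4⟩ := hinj _ _ _ _ h1 h2
      ext <;> linarith)
    (hPS hi) (by simp) (by simp)
    (by
      intro p hp h1 h2
      by_contra h3
      push Not at h3
      have hpos : 0 < k * (p.1 - i1) + l * (p.2 - i2) := by
        refine lt_of_le_of_ne h3 ?_
        intro h4
        apply h2
        obtain ⟨h5, h6⟩ := hinj (p.1 - i1) (p.2 - i2) 0 0 (by linarith) (by linarith)
        ext <;> simp only <;> linarith
      rcases hSa p hp with h4 | rfl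
      · set M := k * (p.1 - i1) + l * (p.2 - i2) with hM
        refine hna p h4 ((k ^ 2 + l ^ 2) / M) (by positivity) ?_ ?_
        · field_simp
          rw [hM]
          linear_combination M * hk - l * h1 + k * hM
        · field_simp
          rw [hM]
          linear_combination M * hl + k * h1 + l * hM
      · simp only at hpos
        have : k * (a1 - i1) + l * (a2 - i2) = -(k ^ 2 + l ^ 2) := by rw [hk, hl]; ring
        linarith)
    (by
      intro p hp q hq h1 h2 h3
      have hdet : (k ^ 2 + l ^ 2) * det2 (p - (i1, i2)) (q - (i1, i2)) = 0 := by
        simp only [det2, Prod.fst_sub, Prod.snd_sub]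
        linear_combination h3
      rcases mul_eq_zero.1 hdet with h | h
      · linarith
      · rcases gp _ hi _ (hP p hp h1) _ (hP q hq h2) h with h | h | h
        · exfalso; apply h1; rw [← h]; ring
        · exact h
        · exfalso; apply h2; rw [← h]; ring)
    (by
      intro p hp q hq r hr h1 h2 h4 hne h3
      have hdet : (k ^ 2 + l ^ 2) * det2 (q - p) (r - p) = 0 := by
        simp only [det2, Prod.fst_sub, Prod.snd_sub]
        linear_combination -h3
      rcases mul_eq_zero.1 hdet with h | h
      · linarith
      · rcases gp _ (hP p hp h1) _ (hP q hq h2) _ (hP r hr h4) h with h | h | h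
        · exact absurd h hne
        · exact Or.inr h.symm
        · exact Or.inl h.symm)
    (by
      intro A B hAB
      obtain ⟨p, hp, h⟩ := hcone (A * k - B * l) (A * l + B * k) (by
        by_contra hcon
        push Not at hcon
        obtain ⟨h1, h2⟩ := hcon
        have hA : (k ^ 2 + l ^ 2) * A = 0 := by linear_combination k * h1 + l * h2
        have hB : (k ^ 2 + l ^ 2) * B = 0 := by linear_combination k * h2 - l * h1
        rcases mul_eq_zero.1 hA with h | h
        · linarith
        · rcases mul_eq_zero.1 hB with h' | h'
          · linarith
          · rcases hAB with h3 | h3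
            · exact h3 h
            · exact h3 h')
      exact ⟨p, hPS hp, by linarith⟩)
  refine ⟨c, d, hP c hc Yc.ne', hP d hd Yd.ne, htri, ?_⟩
  unfold Clockwise
  have hdet : (k ^ 2 + l ^ 2) * det2 (c - (i1, i2)) (d - (i1, i2)) < 0 := by
    simp only [det2, Prod.fst_sub, Prod.snd_sub]
    linarith
  by_contra h
  push Not at h
  have := mul_nonneg hkl.le h
  linarith

/-! ### Verifying an explicit triangulation -/

lemma aff_det (a b : Pt) : Aff (fun x => det2 (b - a) (x - a)) := by
  intro p q s
  simp [det2]
  ring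

lemma det_lerp (a b p q : Pt) (s : ℝ) : det2 (b - a) ((1 - s) • p + s • q - a) =
    (1 - s) * det2 (b - a) (p - a) + s * det2 (b - a) (q - a) := aff_det a b p q s

lemma det2_self_left (a b : Pt) : det2 (b - a) (a - a) = 0 := by simp [det2]

lemma det2_self_right (a b : Pt) : det2 (b - a) (b - a) = 0 := by
  simp only [det2]; ring

lemma det_seg {a b x : Pt} (hx : x ∈ segment ℝ a b) : det2 (b - a) (x - a) = 0 := by
  obtain ⟨s, -, -, rfl⟩ := mem_seg_iff.1 hx
  have := aff_det a b a b s
  simp only at this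
  rw [this, det2_self_left, det2_self_right]
  ring

lemma noncross_shared {a b d : Pt} (h : det2 (b - a) (d - a) ≠ 0) : ¬ Crosses a b a d := by
  rintro ⟨x, h1, h2, h3⟩
  have h4 := det_seg h1
  obtain ⟨s, -, -, hs⟩ := mem_seg_iff.1 h2
  have := aff_det a b a d s
  simp only at this
  rw [← hs, det2_self_left, h4] at this
  have h5 : s * det2 (b - a) (d - a) = 0 := by linarith
  rcases mul_eq_zero.1 h5 with h6 | h6
  · rw [h6] at hs
    simp at hs
    exact h3 ⟨Or.inl hs, Or.inl hs⟩
  · exact h h6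

lemma noncross_sep {a b c d : Pt} (h : 0 < det2 (b - a) (c - a) * det2 (b - a) (d - a)) :
    ¬ Crosses a b c d := by
  rintro ⟨x, h1, h2, h3⟩
  have h4 := det_seg h1
  obtain ⟨s, s0, s1, hs⟩ := mem_seg_iff.1 h2
  have := aff_det a b c d s
  simp only at this
  rw [← hs, h4] at this
  have s1' : 0 ≤ 1 - s := by linarith
  rcases pos_and_pos_or_neg_and_neg_of_mul_pos h with ⟨h5, h6⟩ | ⟨h5, h6⟩
  · have h7 := mul_nonneg s1' h5.le
    have h8 := mul_nonneg s0 h6.le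
    have h9 : s * det2 (b - a) (d - a) = 0 := by linarith
    rcases mul_eq_zero.1 h9 with h10 | h10
    · rw [h10] at this; linarith
    · linarith
  · have h7 := mul_nonneg s1' (neg_pos.2 h5).le
    have h8 := mul_nonneg s0 (neg_pos.2 h6).le
    have h9 : s * det2 (b - a) (d - a) = 0 := by linarith
    rcases mul_eq_zero.1 h9 with h10 | h10
    · rw [h10] at this; linarith
    · linarith

lemma cross_of_sep {a b c d : Pt} (h : det2 (b - a) (c - a) * det2 (b - a) (d - a) < 0)
    (h' : det2 (d - c) (a - c) * det2 (d - c) (b - c) < 0) : Crosses a b c d := by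
  obtain ⟨t, t0, t1, ht⟩ : ∃ t : ℝ, 0 ≤ t ∧ t ≤ 1 ∧
      (1 - t) * det2 (d - c) (a - c) + t * det2 (d - c) (b - c) = 0 := by
    rcases mul_neg_iff.1 h' with ⟨h1, h2⟩ | ⟨h1, h2⟩
    · have := zero_between (aff_det c d) (z := a) (w := b) h1.le h2.le
      simpa only [aff_det c d a b _] using this
    · have := zero_between (h := fun x => - det2 (d - c) (x - c)) (z := a) (w := b)
        (by intro p q s; have := aff_det c d p q s; simp only at this; simp only [this]; ring)
        (by linarith) (by linarith)
      obtain ⟨t, t0, t1, ht⟩ := this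
      rw [det_lerp] at ht
      exact ⟨t, t0, t1, by linarith⟩
  refine ⟨(1 - t) • a + t • b, mem_seg_iff.2 ⟨t, t0, t1, rfl⟩, ?_, ?_⟩
  · obtain ⟨s, s0, s1, hs⟩ : ∃ s : ℝ, 0 ≤ s ∧ s ≤ 1 ∧
        (1 - s) * det2 (b - a) (c - a) + s * det2 (b - a) (d - a) = 0 := by
      rcases mul_neg_iff.1 h with ⟨h1, h2⟩ | ⟨h1, h2⟩
      · have := zero_between (aff_det a b) (z := c) (w := d) h1.le h2.le
        simpa only [aff_det a b c d _] using this
      · have := zero_between (h := fun x => - det2 (b - a) (x - a)) (z := c) (w := d)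
          (by intro p q s; have := aff_det a b p q s; simp only at this; simp only [this]; ring)
          (by linarith) (by linarith)
        obtain ⟨t, t0, t1, ht⟩ := this
        rw [det_lerp] at ht
        exact ⟨t, t0, t1, by linarith⟩
    have hW : det2 (b - a) (c - a) - det2 (b - a) (d - a) ≠ 0 := by
      intro h0
      have : det2 (b - a) (c - a) = det2 (b - a) (d - a) := by linarith
      rw [this] at h
      nlinarith
    rw [mem_seg_iff]
    refine ⟨s, s0, s1, ?_⟩
    ext
    · apply mul_left_cancel₀ hW
      simp only [det2, Prod.fst_add, Prod.smul_fst, Prod.fst_sub, Prod.snd_sub, smul_eq_mul] at *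
      linear_combination (b.1 - a.1) * ht + (d.1 - c.1) * hs
    · apply mul_left_cancel₀ hW
      simp only [det2, Prod.snd_add, Prod.smul_snd, Prod.fst_sub, Prod.snd_sub, smul_eq_mul] at *
      linear_combination (b.2 - a.2) * ht + (d.2 - c.2) * hs
  · have hz : det2 (d - c) ((1 - t) • a + t • b - c) = 0 := by
      rw [← ht]
      exact aff_det c d a b t
    rintro ⟨h1 | h1, -⟩
    · rw [h1] at hz
      rw [hz] at h'
      linarith
    · rw [h1] at hz
      rw [hz] at h'
      linarith

/-- Integer orientation determinant of three indexed points. -/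
def DD (f : Fin 8 → ℤ × ℤ) (i j k : Fin 8) : ℤ :=
  ((f j).1 - (f i).1) * ((f k).2 - (f i).2) - ((f j).2 - (f i).2) * ((f k).1 - (f i).1)

/-- The real point with given index. -/
def FF (f : Fin 8 → ℤ × ℤ) (i : Fin 8) : Pt := ((f i).1, (f i).2)

/-- The edge set given by an adjacency table. -/
def TT (f : Fin 8 → ℤ × ℤ) (E : Fin 8 → Fin 8 → Bool) : Set (Sym2 Pt) :=
  {e | ∃ i j, E i j = true ∧ e = s(FF f i, FF f j)}

lemma det_FF (f : Fin 8 → ℤ × ℤ) (i j k : Fin 8) :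
    det2 (FF f j - FF f i) (FF f k - FF f i) = (DD f i j k : ℝ) := by
  simp [det2, FF, DD]

lemma FF_inj {f : Fin 8 → ℤ × ℤ} (inj : ∀ i j, f i = f j → i = j) {i j : Fin 8}
    (h : FF f i = FF f j) : i = j := by
  apply inj
  simp only [FF, Prod.mk.injEq, Int.cast_inj] at h
  exact Prod.ext h.1 h.2

lemma mem_TT {f : Fin 8 → ℤ × ℤ} {E : Fin 8 → Fin 8 → Bool} (symm : ∀ i j, E i j = E j i)
    {a b : Pt} (h : s(a, b) ∈ TT f E) : ∃ i j, E i j = true ∧ a = FF f i ∧ b = FF f j := by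
  obtain ⟨i, j, hE, h⟩ := h
  rcases Sym2.eq_iff.1 h with ⟨h1, h2⟩ | ⟨h1, h2⟩
  · exact ⟨i, j, hE, h1, h2⟩
  · exact ⟨j, i, by rw [symm]; exact hE, h1, h2⟩

lemma crosses_swap_left {a b c d : Pt} (h : Crosses a b c d) : Crosses b a c d :=
  crosses_congr Sym2.eq_swap h

lemma crosses_swap_right {a b c d : Pt} (h : Crosses a b c d) : Crosses a b d c :=
  crosses_symm (crosses_swap_left (crosses_symm h))

lemma det_swap (a b c : Pt) : det2 (a - b) (c - b) = - det2 (b - a) (c - a) := by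
  simp only [det2, Prod.fst_sub, Prod.snd_sub]; ring

lemma explicit_tri {f : Fin 8 → ℤ × ℤ} {E : Fin 8 → Fin 8 → Bool} {S : Finset Pt}
    (hS : ∀ x, x ∈ S ↔ ∃ i, x = FF f i) (symm : ∀ i j, E i j = E j i)
    (irr : ∀ i, E i i = false) (inj : ∀ i j, f i = f j → i = j)
    (H1 : ∀ i j, E i j = true → ∀ k l, E k l = true → (i = k ∧ j = l) ∨ (i = l ∧ j = k) ∨
      (i = k ∧ DD f i j l ≠ 0) ∨ (i = l ∧ DD f i j k ≠ 0) ∨ (j = k ∧ DD f i j l ≠ 0) ∨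
      (j = l ∧ DD f i j k ≠ 0) ∨ 0 < DD f i j k * DD f i j l ∨ 0 < DD f k l i * DD f k l j)
    (H2 : ∀ i j, i ≠ j → E i j = true ∨ ∃ k l, E k l = true ∧ DD f i j k * DD f i j l < 0 ∧
      DD f k l i * DD f k l j < 0) :
    IsTriangulation S (TT f E) := by
  have hne : ∀ i j, E i j = true → FF f i ≠ FF f j := by
    intro i j hE h
    have := FF_inj inj h
    subst this
    rw [irr] at hE
    exact Bool.noConfusion hE
  refine ⟨⟨?_, ?_⟩, ?_⟩
  · rintro e ⟨i, j, hE, rfl⟩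
    exact ⟨_, _, (hS _).2 ⟨i, rfl⟩, (hS _).2 ⟨j, rfl⟩, hne i j hE, rfl⟩
  · intro a b c d hab hcd hd
    obtain ⟨i, j, hE, rfl, rfl⟩ := mem_TT symm hab
    obtain ⟨k, l, hE', rfl, rfl⟩ := mem_TT symm hcd
    rcases H1 i j hE k l hE' with ⟨rfl, rfl⟩ | ⟨rfl, rfl⟩ | ⟨rfl, h⟩ | ⟨rfl, h⟩ | ⟨rfl, h⟩ |
      ⟨rfl, h⟩ | h | h
    · exact absurd rfl hd
    · exact absurd Sym2.eq_swap hd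
    · apply noncross_shared
      rw [det_FF]; exact_mod_cast h
    · intro hc
      refine noncross_shared ?_ (crosses_swap_right hc)
      rw [det_FF]; exact_mod_cast h
    · intro hc
      refine noncross_shared ?_ (crosses_swap_left hc)
      rw [det_swap, det_FF]; exact_mod_cast neg_ne_zero.2 h
    · intro hc
      refine noncross_shared ?_ (crosses_swap_left (crosses_swap_right hc))
      rw [det_swap, det_FF]; exact_mod_cast neg_ne_zero.2 h
    · apply noncross_sep
      rw [det_FF, det_FF]; exact_mod_cast h
    · intro hc
      refine noncross_sep ?_ (crosses_symm hc)
      rw [det_FF, det_FF]; exact_mod_cast h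
  · intro T' hT' hsub
    apply Set.Subset.antisymm _ hsub
    intro e he
    obtain ⟨a, b, ha, hb, hab, rfl⟩ := hT'.1 e he
    obtain ⟨i, rfl⟩ := (hS a).1 ha
    obtain ⟨j, rfl⟩ := (hS b).1 hb
    rcases H2 i j (fun h => hab (by rw [h])) with h | ⟨k, l, hE, h1, h2⟩
    · exact ⟨i, j, h, rfl⟩
    · exfalso
      have h1' : det2 (FF f j - FF f i) (FF f k - FF f i) *
          det2 (FF f j - FF f i) (FF f l - FF f i) < 0 := by
        rw [det_FF, det_FF]; exact_mod_cast h1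
      have h2' : det2 (FF f l - FF f k) (FF f i - FF f k) *
          det2 (FF f l - FF f k) (FF f j - FF f k) < 0 := by
        rw [det_FF, det_FF]; exact_mod_cast h2
      refine hT'.2 _ _ _ _ he (hsub ⟨k, l, hE, rfl⟩) ?_ (cross_of_sep h1' h2')
      intro h
      rcases Sym2.eq_iff.1 h with ⟨h3, h4⟩ | ⟨h3, h4⟩
      · rw [← h3, det2_self_left] at h1'; linarith
      · rw [← h4, det2_self_right] at h1'; linarith

lemma explicit_face {f : Fin 8 → ℤ × ℤ} {E : Fin 8 → Fin 8 → Bool} {S : Finset Pt}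
    (hS : ∀ x, x ∈ S ↔ ∃ i, x = FF f i) (symm : ∀ i j, E i j = E j i)
    (irr : ∀ i, E i i = false) (inj : ∀ i j, f i = f j → i = j)
    (H0 : ∀ i, ∃ j, E i j = true)
    (H3 : ∀ a b, E a b = true → ∀ c, E b c = true → E a c = true → ∀ u v, E u v = true →
      ∃ p q, 0 ≤ DD f p q a ∧ 0 ≤ DD f p q b ∧ 0 ≤ DD f p q c ∧
        (0 < DD f p q a ∨ 0 < DD f p q b ∨ 0 < DD f p q c) ∧ DD f p q u ≤ 0 ∧ DD f p q v ≤ 0)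
    (a b c : Fin 8) :
    IsTriangleOf S (TT f E) (FF f a) (FF f b) (FF f c) ↔
      (E a b = true ∧ E b c = true ∧ E a c = true) := by
  have hne : ∀ i j, E i j = true → FF f i ≠ FF f j := by
    intro i j hE h
    have := FF_inj inj h
    subst this
    rw [irr] at hE
    exact Bool.noConfusion hE
  have hmem : ∀ i j, s(FF f i, FF f j) ∈ TT f E → E i j = true := by
    intro i j h
    obtain ⟨i', j', hE, h1, h2⟩ := mem_TT symm h
    rwa [FF_inj inj h1, FF_inj inj h2]
  constructor
  · rintro ⟨-, -, -, -, -, -, h1, h2, h3, -⟩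
    exact ⟨hmem _ _ h1, hmem _ _ h2, hmem _ _ h3⟩
  · rintro ⟨h1, h2, h3⟩
    have main : ∀ u v : Pt, s(u, v) ∈ TT f E → ∀ x ∈ segment ℝ u v,
        x ∉ openTriangle (FF f a) (FF f b) (FF f c) := by
      intro u v huv x hx hxo
      obtain ⟨i, j, hE, rfl, rfl⟩ := mem_TT symm huv
      obtain ⟨p, q, ha, hb, hc, hw, hu, hv⟩ := H3 a b h1 c h2 h3 i j hE
      have hA := aff_det (FF f p) (FF f q)
      have hcast : ∀ k, det2 (FF f q - FF f p) (FF f k - FF f p) = (DD f p q k : ℝ) :=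
        fun k => det_FF f p q k
      have hpos : 0 < det2 (FF f q - FF f p) (x - FF f p) := by
        obtain ⟨w, hw⟩ : ∃ w, 0 < DD f p q w := by
          rcases hw with h | h | h
          · exact ⟨_, h⟩
          · exact ⟨_, h⟩
          · exact ⟨_, h⟩
        refine openTriangle_pos hA (w := FF f w) ?_ ?_ ?_ ?_ hxo
        · rw [hcast]; exact_mod_cast ha
        · rw [hcast]; exact_mod_cast hb
        · rw [hcast]; exact_mod_cast hc
        · rw [hcast]; exact_mod_cast hw
      obtain ⟨s, s0, s1, rfl⟩ := mem_seg_iff.1 hx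
      rw [det_lerp] at hpos
      rw [hcast, hcast] at hpos
      have hu' : (DD f p q i : ℝ) ≤ 0 := by exact_mod_cast hu
      have hv' : (DD f p q j : ℝ) ≤ 0 := by exact_mod_cast hv
      have h4 := mul_nonneg (sub_nonneg.2 s1) (neg_nonneg.2 hu')
      have h5 := mul_nonneg s0 (neg_nonneg.2 hv')
      linarith
    refine ⟨(hS _).2 ⟨_, rfl⟩, (hS _).2 ⟨_, rfl⟩, (hS _).2 ⟨_, rfl⟩, hne _ _ h1, hne _ _ h2,
      hne _ _ h3, ⟨_, _, h1, rfl⟩, ⟨_, _, h2, rfl⟩, ⟨_, _, h3, rfl⟩, ?_, main⟩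
    intro p hp
    obtain ⟨i, rfl⟩ := (hS p).1 hp
    obtain ⟨j, hj⟩ := H0 i
    exact main _ _ ⟨i, j, hj, rfl⟩ _ (left_mem_segment _ _ _)

/-! ### The explicit configuration -/

/-- The six points of `P` followed by the two Steiner points. -/
def fP : Fin 8 → ℤ × ℤ :=
  ![(-3, -3), (-2, -2), (-2, -1), (2, 1), (0, 2), (-1, 3), (-5, 0), (5, 0)]

/-- The six points of `Q` followed by the two Steiner points. -/
def fQ : Fin 8 → ℤ × ℤ :=
  ![(3, -3), (2, -2), (2, -1), (-2, 1), (0, 2), (1, 3), (-5, 0), (5, 0)]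

/-- The common adjacency table: the monotone path, joined to both Steiner points. -/
def EE (i j : Fin 8) : Bool :=
  (decide (i.val < 6) && decide (j.val < 6) &&
    (decide (i.val + 1 = j.val) || decide (j.val + 1 = i.val))) ||
  (decide (i.val < 6) && decide (6 ≤ j.val)) || (decide (6 ≤ i.val) && decide (j.val < 6))

lemma EE_symm : ∀ i j, EE i j = EE j i := by decide +kernel

lemma EE_irr : ∀ i, EE i i = false := by decide +kernel

lemma EE_total : ∀ i, ∃ j, EE i j = true := by decide +kernel

lemma fP_inj : ∀ i j, fP i = fP j → i = j := by decide +kernel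

lemma fQ_inj : ∀ i j, fQ i = fQ j → i = j := by decide +kernel

/-- The check that the table has no crossings. -/
def NoCross (f : Fin 8 → ℤ × ℤ) : Prop :=
  ∀ i j, EE i j = true → ∀ k l, EE k l = true → (i = k ∧ j = l) ∨ (i = l ∧ j = k) ∨
      (i = k ∧ DD f i j l ≠ 0) ∨ (i = l ∧ DD f i j k ≠ 0) ∨ (j = k ∧ DD f i j l ≠ 0) ∨
      (j = l ∧ DD f i j k ≠ 0) ∨ 0 < DD f i j k * DD f i j l ∨ 0 < DD f k l i * DD f k l j

instance (f : Fin 8 → ℤ × ℤ) : Decidable (NoCross f) := by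
  unfold NoCross; infer_instance

/-- The check that the table is maximal. -/
def MaxCheck (f : Fin 8 → ℤ × ℤ) : Prop :=
  ∀ i j, i ≠ j → EE i j = true ∨ ∃ k l, EE k l = true ∧ DD f i j k * DD f i j l < 0 ∧
      DD f k l i * DD f k l j < 0

instance (f : Fin 8 → ℤ × ℤ) : Decidable (MaxCheck f) := by
  unfold MaxCheck; infer_instance

/-- The line through the points `p`, `q` weakly separates the triangle `a b c` from `u v`. -/
def lineOK (f : Fin 8 → ℤ × ℤ) (a b c u v p q : Fin 8) : Bool :=
  decide (DD f p q u ≤ 0) && (decide (DD f p q v ≤ 0) && (decide (0 ≤ DD f p q a) &&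
    (decide (0 ≤ DD f p q b) && (decide (0 ≤ DD f p q c) &&
      (decide (0 < DD f p q a) || (decide (0 < DD f p q b) || decide (0 < DD f p q c)))))))

/-- The check that all triangles of the table are empty. -/
def FaceCheck (f : Fin 8 → ℤ × ℤ) : Prop :=
  ∀ a b, EE a b = true → ∀ c, EE b c = true → EE a c = true → ∀ u v, EE u v = true →
    (lineOK f a b c u v a b || (lineOK f a b c u v b a || (lineOK f a b c u v b c ||
      (lineOK f a b c u v c b || (lineOK f a b c u v a c || (lineOK f a b c u v c a ||
        (lineOK f a b c u v u v || lineOK f a b c u v v u))))))) = true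

instance (f : Fin 8 → ℤ × ℤ) : Decidable (FaceCheck f) := by
  unfold FaceCheck; infer_instance

lemma FaceCheck.sep {f : Fin 8 → ℤ × ℤ} (h : FaceCheck f) :
    ∀ a b, EE a b = true → ∀ c, EE b c = true → EE a c = true → ∀ u v, EE u v = true →
      ∃ p q, 0 ≤ DD f p q a ∧ 0 ≤ DD f p q b ∧ 0 ≤ DD f p q c ∧
        (0 < DD f p q a ∨ 0 < DD f p q b ∨ 0 < DD f p q c) ∧ DD f p q u ≤ 0 ∧ DD f p q v ≤ 0 := by
  intro a b e1 c e2 e3 u v e4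
  have key : ∀ p q, lineOK f a b c u v p q = true → ∃ p q, 0 ≤ DD f p q a ∧ 0 ≤ DD f p q b ∧
      0 ≤ DD f p q c ∧ (0 < DD f p q a ∨ 0 < DD f p q b ∨ 0 < DD f p q c) ∧
      DD f p q u ≤ 0 ∧ DD f p q v ≤ 0 := by
    intro p q hl
    simp only [lineOK, Bool.and_eq_true, Bool.or_eq_true, decide_eq_true_eq] at hl
    exact ⟨p, q, by tauto⟩
  have h1 := h a b e1 c e2 e3 u v e4
  simp only [Bool.or_eq_true] at h1
  rcases h1 with h1 | h1 | h1 | h1 | h1 | h1 | h1 | h1 <;> exact key _ _ h1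

lemma noCross_P : NoCross fP := by decide +kernel

lemma noCross_Q : NoCross fQ := by decide +kernel

lemma maxCheck_P : MaxCheck fP := by decide +kernel

lemma maxCheck_Q : MaxCheck fQ := by decide +kernel

lemma faceCheck_P : FaceCheck fP := by decide +kernel

lemma faceCheck_Q : FaceCheck fQ := by decide +kernel

lemma cw_agree : ∀ i j, EE i j = true → ∀ k, EE j k = true → EE i k = true →
    (DD fP i j k < 0 ↔ DD fQ i j k < 0) := by decide +kernel

lemma gp_P : ∀ i j k, DD fP i j k = 0 → i = j ∨ j = k ∨ i = k := by decide +kernel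

lemma gp_Q : ∀ i j k, DD fQ i j k = 0 → i = j ∨ j = k ∨ i = k := by decide +kernel

/-- The set `P`. -/
noncomputable def PP : Finset Pt := {(-3, -3), (-2, -2), (-2, -1), (2, 1), (0, 2), (-1, 3)}

/-- The set `Q`. -/
noncomputable def QQ : Finset Pt := {(3, -3), (2, -2), (2, -1), (-2, 1), (0, 2), (1, 3)}

/-- The reflection. -/
noncomputable def phi (p : Pt) : Pt := (-p.1, p.2)

/-- The extended map. -/
noncomputable def psi (p : Pt) : Pt := if p.2 = 0 then p else (-p.1, p.2)

lemma mem_PP (x : Pt) : x ∈ PP ↔ x = (-3, -3) ∨ x = (-2, -2) ∨ x = (-2, -1) ∨ x = (2, 1) ∨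
    x = (0, 2) ∨ x = (-1, 3) := by
  simp only [PP, Finset.mem_insert, Finset.mem_singleton]

lemma mem_QQ (x : Pt) : x ∈ QQ ↔ x = (3, -3) ∨ x = (2, -2) ∨ x = (2, -1) ∨ x = (-2, 1) ∨
    x = (0, 2) ∨ x = (1, 3) := by
  simp only [QQ, Finset.mem_insert, Finset.mem_singleton]

lemma FF_P : FF fP 0 = (-3, -3) ∧ FF fP 1 = (-2, -2) ∧ FF fP 2 = (-2, -1) ∧ FF fP 3 = (2, 1) ∧
    FF fP 4 = (0, 2) ∧ FF fP 5 = (-1, 3) ∧ FF fP 6 = (-5, 0) ∧ FF fP 7 = (5, 0) := by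
  simp [FF, fP]

lemma FF_Q : FF fQ 0 = (3, -3) ∧ FF fQ 1 = (2, -2) ∧ FF fQ 2 = (2, -1) ∧ FF fQ 3 = (-2, 1) ∧
    FF fQ 4 = (0, 2) ∧ FF fQ 5 = (1, 3) ∧ FF fQ 6 = (-5, 0) ∧ FF fQ 7 = (5, 0) := by
  simp [FF, fQ]

lemma ex8 {p : Fin 8 → Prop} : (∃ i, p i) ↔
    p 0 ∨ p 1 ∨ p 2 ∨ p 3 ∨ p 4 ∨ p 5 ∨ p 6 ∨ p 7 := by
  constructor
  · rintro ⟨i, hi⟩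
    fin_cases i <;> simp_all
  · rintro (h | h | h | h | h | h | h | h) <;> exact ⟨_, h⟩

lemma mem_PP8 (x : Pt) : x ∈ insert ((-5, 0) : Pt) (insert ((5, 0) : Pt) PP) ↔
    ∃ i, x = FF fP i := by
  obtain ⟨h0, h1, h2, h3, h4, h5, h6, h7⟩ := FF_P
  rw [Finset.mem_insert, Finset.mem_insert, mem_PP, ex8, h0, h1, h2, h3, h4, h5, h6, h7]
  tauto

lemma mem_QQ8 (x : Pt) : x ∈ insert ((-5, 0) : Pt) (insert ((5, 0) : Pt) QQ) ↔
    ∃ i, x = FF fQ i := by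
  obtain ⟨h0, h1, h2, h3, h4, h5, h6, h7⟩ := FF_Q
  rw [Finset.mem_insert, Finset.mem_insert, mem_QQ, ex8, h0, h1, h2, h3, h4, h5, h6, h7]
  tauto

lemma index_P {x : Pt} (h : x ∈ PP) : ∃ i, x = FF fP i := by
  rw [← mem_PP8]
  exact Finset.mem_insert_of_mem (Finset.mem_insert_of_mem h)

lemma index_Q {x : Pt} (h : x ∈ QQ) : ∃ i, x = FF fQ i := by
  rw [← mem_QQ8]
  exact Finset.mem_insert_of_mem (Finset.mem_insert_of_mem h)

lemma psi_FF (i : Fin 8) : psi (FF fP i) = FF fQ i := by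
  fin_cases i <;> simp [psi, FF, fP, fQ]

lemma psi_eq_phi {x : Pt} (h : x ∈ PP) : psi x = phi x := by
  rw [mem_PP] at h
  rcases h with rfl | rfl | rfl | rfl | rfl | rfl <;> simp [psi, phi]

lemma det_gp_P : ∀ p ∈ PP, ∀ q ∈ PP, ∀ r ∈ PP, det2 (q - p) (r - p) = 0 →
    p = q ∨ q = r ∨ p = r := by
  intro p hp q hq r hr h
  obtain ⟨i, rfl⟩ := index_P hp
  obtain ⟨j, rfl⟩ := index_P hq
  obtain ⟨k, rfl⟩ := index_P hr
  rw [det_FF] at h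
  rcases gp_P i j k (by exact_mod_cast h) with rfl | rfl | rfl <;> simp

lemma det_gp_Q : ∀ p ∈ QQ, ∀ q ∈ QQ, ∀ r ∈ QQ, det2 (q - p) (r - p) = 0 →
    p = q ∨ q = r ∨ p = r := by
  intro p hp q hq r hr h
  obtain ⟨i, rfl⟩ := index_Q hp
  obtain ⟨j, rfl⟩ := index_Q hq
  obtain ⟨k, rfl⟩ := index_Q hr
  rw [det_FF] at h
  rcases gp_Q i j k (by exact_mod_cast h) with rfl | rfl | rfl <;> simp

lemma collinear_det {a b c : Pt} (h : Collinear ℝ ({a, b, c} : Set Pt)) :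
    det2 (b - a) (c - a) = 0 := by
  obtain ⟨v, hv⟩ := (collinear_iff_of_mem (p₀ := a) (by simp)).1 h
  obtain ⟨r, hr⟩ := hv b (by simp)
  obtain ⟨s, hs⟩ := hv c (by simp)
  rw [hr, hs]
  simp [det2]
  ring

lemma genPos_PP : GenPos PP := by
  intro a b c ha hb hc h1 h2 h3 h
  rcases det_gp_P a ha b hb c hc (collinear_det h) with h | h | h <;> contradiction

lemma genPos_QQ : GenPos QQ := by
  intro a b c ha hb hc h1 h2 h3 h
  rcases det_gp_Q a ha b hb c hc (collinear_det h) with h | h | h <;> contradiction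

lemma card_PP : PP.card = 6 := by
  unfold PP
  repeat rw [Finset.card_insert_of_notMem (by simp <;> norm_num)]
  simp

lemma card_QQ : QQ.card = 6 := by
  unfold QQ
  repeat rw [Finset.card_insert_of_notMem (by simp <;> norm_num)]
  simp

lemma bijOn_phi : Set.BijOn phi (PP : Set Pt) (QQ : Set Pt) := by
  refine ⟨?_, ?_, ?_⟩
  · intro x hx
    rw [Finset.mem_coe, mem_PP] at hx
    rw [Finset.mem_coe, mem_QQ]
    rcases hx with rfl | rfl | rfl | rfl | rfl | rfl <;> simp [phi]
  · intro x _ y _ h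
    simp only [phi, Prod.mk.injEq, neg_inj] at h
    exact Prod.ext h.1 h.2
  · intro y hy
    refine ⟨phi y, ?_, by simp [phi]⟩
    rw [Finset.mem_coe, mem_QQ] at hy
    rw [Finset.mem_coe, mem_PP]
    rcases hy with rfl | rfl | rfl | rfl | rfl | rfl <;> simp [phi]

/-- The reflection reverses orientations, so no triangle with vertices in `P` survives. -/
lemma not_both {a b c : Pt} (h : Clockwise a b c) : ¬ Clockwise (phi a) (phi b) (phi c) := by
  unfold Clockwise at *
  intro h2
  simp only [det2, phi, Prod.fst_sub, Prod.snd_sub] at h h2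
  linarith

/-- If the triangulations are compatible, the extra point is opposite to some point of `P`
with respect to each internal point. -/
lemma must_oppose {S S' : Finset Pt} {T T' : Set (Sym2 Pt)} (hT : IsTriangulation S T)
    (hPS : PP ⊆ S) {i a : Pt} (hSa : ∀ p ∈ S, p ∈ PP ∨ p = a) (hi : i ∈ PP) (hai : a ≠ i)
    (hcone : ∀ A B : ℝ, (A ≠ 0 ∨ B ≠ 0) → ∃ p ∈ PP, 0 < A * (p.1 - i.1) + B * (p.2 - i.2))
    {ψ : Pt → Pt} (hψ : ∀ x ∈ PP, ψ x = phi x) (hc : CompatibleVia S S' T T' ψ) :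
    ∃ p ∈ PP, ∃ s : ℝ, 0 < s ∧ a.1 = i.1 + s * (i.1 - p.1) ∧ a.2 = i.2 + s * (i.2 - p.2) := by
  by_contra hcon
  push Not at hcon
  obtain ⟨c, d, hcP, hdP, htri, hcw⟩ := core_clockwise hT hPS hSa hi hai det_gp_P hcone
    (fun p hp s hs h1 h2 => hcon p hp s hs h1 h2)
  have := ((hc.2 i c d (hPS hi) (hPS hcP) (hPS hdP)).1 ⟨htri, hcw⟩).2
  rw [hψ i hi, hψ c hcP, hψ d hdP] at this
  exact not_both hcw this

lemma hcone_of {i : Pt} (hzero : ∀ A B : ℝ, A * (-3 - i.1) + B * (-3 - i.2) ≤ 0 →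
      A * (2 - i.1) + B * (1 - i.2) ≤ 0 → A * (-1 - i.1) + B * (3 - i.2) ≤ 0 → A = 0 ∧ B = 0) :
    ∀ A B : ℝ, (A ≠ 0 ∨ B ≠ 0) → ∃ p ∈ PP, 0 < A * (p.1 - i.1) + B * (p.2 - i.2) := by
  intro A B h
  by_contra hcon
  push Not at hcon
  obtain ⟨h1, h2⟩ := hzero A B (hcon (-3, -3) (by rw [mem_PP]; simp))
    (hcon (2, 1) (by rw [mem_PP]; simp)) (hcon (-1, 3) (by rw [mem_PP]; simp))
  rcases h with h | h
  · exact h h1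
  · exact h h2

lemma hcone1 : ∀ A B : ℝ, (A ≠ 0 ∨ B ≠ 0) →
    ∃ p ∈ PP, 0 < A * (p.1 - ((-2, -2) : Pt).1) + B * (p.2 - ((-2, -2) : Pt).2) := by
  apply hcone_of
  intro A B h1 h2 h3
  norm_num at h1 h2 h3
  constructor <;> linarith

lemma hcone2 : ∀ A B : ℝ, (A ≠ 0 ∨ B ≠ 0) →
    ∃ p ∈ PP, 0 < A * (p.1 - ((-2, -1) : Pt).1) + B * (p.2 - ((-2, -1) : Pt).2) := by
  apply hcone_of
  intro A B h1 h2 h3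
  norm_num at h1 h2 h3
  constructor <;> linarith

lemma hcone3 : ∀ A B : ℝ, (A ≠ 0 ∨ B ≠ 0) →
    ∃ p ∈ PP, 0 < A * (p.1 - ((0, 2) : Pt).1) + B * (p.2 - ((0, 2) : Pt).2) := by
  apply hcone_of
  intro A B h1 h2 h3
  norm_num at h1 h2 h3
  constructor <;> linarith

/-- No point is opposite to points of `P` with respect to all three internal points. -/
lemma no_opposite {a : Pt} (haP : a ∉ PP)
    (h1 : ∃ p ∈ PP, ∃ s : ℝ, 0 < s ∧ a.1 = ((-2, -2) : Pt).1 + s * (((-2, -2) : Pt).1 - p.1) ∧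
      a.2 = ((-2, -2) : Pt).2 + s * (((-2, -2) : Pt).2 - p.2))
    (h2 : ∃ p ∈ PP, ∃ s : ℝ, 0 < s ∧ a.1 = ((-2, -1) : Pt).1 + s * (((-2, -1) : Pt).1 - p.1) ∧
      a.2 = ((-2, -1) : Pt).2 + s * (((-2, -1) : Pt).2 - p.2))
    (h3 : ∃ p ∈ PP, ∃ s : ℝ, 0 < s ∧ a.1 = ((0, 2) : Pt).1 + s * (((0, 2) : Pt).1 - p.1) ∧
      a.2 = ((0, 2) : Pt).2 + s * (((0, 2) : Pt).2 - p.2)) : False := by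
  obtain ⟨x, y⟩ := a
  rw [mem_PP] at haP
  obtain ⟨p, hp, s, s0, hs1, hs2⟩ := h1
  obtain ⟨q, hq, t, t0, ht1, ht2⟩ := h2
  obtain ⟨r, hr, w, w0, hw1, hw2⟩ := h3
  rw [mem_PP] at hp hq hr
  simp only at hs1 hs2 ht1 ht2 hw1 hw2
  have e1 : ¬ (x = -2 ∧ y = -2) := by
    rintro ⟨rfl, rfl⟩
    exact haP (by simp)
  have e2 : ¬ (x = -2 ∧ y = -1) := by
    rintro ⟨rfl, rfl⟩
    exact haP (by simp)
  have e3 : ¬ (x = 0 ∧ y = 2) := by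
    rintro ⟨rfl, rfl⟩
    exact haP (by simp)
  rcases hp with rfl | rfl | rfl | rfl | rfl | rfl <;>
  first
  | exact e1 ⟨by linarith, by linarith⟩
  | (rcases hq with rfl | rfl | rfl | rfl | rfl | rfl <;>
     first
     | exact e2 ⟨by linarith, by linarith⟩
     | linarith
     | (rcases hr with rfl | rfl | rfl | rfl | rfl | rfl <;>
        exact e3 ⟨by linarith, by linarith⟩))

lemma final_one : ∀ aP aQ : Pt, aP ∉ PP → aQ ∉ QQ →
    ∀ ψ : Pt → Pt, (∀ x ∈ PP, ψ x = phi x) → ψ aP = aQ →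
      ∀ TP TQ : Set (Sym2 Pt),
        IsTriangulation (insert aP PP) TP → IsTriangulation (insert aQ QQ) TQ →
        ¬ CompatibleVia (insert aP PP) (insert aQ QQ) TP TQ ψ := by
  intro aP aQ haP _ ψ hψ _ TP TQ hTP _ hc
  have hSa : ∀ p ∈ insert aP PP, p ∈ PP ∨ p = aP := by
    intro p hp
    rcases Finset.mem_insert.1 hp with h | h
    · exact Or.inr h
    · exact Or.inl h
  have key : ∀ i ∈ PP,
      (∀ A B : ℝ, (A ≠ 0 ∨ B ≠ 0) → ∃ p ∈ PP, 0 < A * (p.1 - i.1) + B * (p.2 - i.2)) →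
      ∃ p ∈ PP, ∃ s : ℝ, 0 < s ∧ aP.1 = i.1 + s * (i.1 - p.1) ∧
        aP.2 = i.2 + s * (i.2 - p.2) := by
    intro i hi hcone
    refine must_oppose hTP (Finset.subset_insert _ _) hSa hi ?_ hcone hψ hc
    rintro rfl
    exact haP hi
  exact no_opposite haP (key _ (by rw [mem_PP]; simp) hcone1) (key _ (by rw [mem_PP]; simp) hcone2)
    (key _ (by rw [mem_PP]; simp) hcone3)

lemma final_zero : ∀ TP TQ : Set (Sym2 Pt), IsTriangulation PP TP → IsTriangulation QQ TQ →
    ¬ CompatibleVia PP QQ TP TQ phi := by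
  intro TP TQ hTP _ hc
  obtain ⟨p, hp, s, s0, h1, h2⟩ := must_oppose hTP (Finset.Subset.refl _)
    (i := (-2, -2)) (a := (-3, -2)) (fun p hp => Or.inl hp) (by rw [mem_PP]; simp)
    (by simp) hcone1 (fun x _ => rfl) hc
  simp only at h1 h2
  rw [mem_PP] at hp
  rcases hp with rfl | rfl | rfl | rfl | rfl | rfl <;> linarith

lemma final_two : CompatibleVia (insert ((-5, 0) : Pt) (insert ((5, 0) : Pt) PP))
    (insert ((-5, 0) : Pt) (insert ((5, 0) : Pt) QQ)) (TT fP EE) (TT fQ EE) psi := by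
  refine ⟨⟨?_, ?_, ?_⟩, ?_⟩
  · intro x hx
    rw [Finset.mem_coe, mem_PP8] at hx
    obtain ⟨i, rfl⟩ := hx
    rw [Finset.mem_coe, mem_QQ8]
    exact ⟨i, psi_FF i⟩
  · intro x hx y hy h
    rw [Finset.mem_coe, mem_PP8] at hx hy
    obtain ⟨i, rfl⟩ := hx
    obtain ⟨j, rfl⟩ := hy
    rw [psi_FF, psi_FF] at h
    rw [FF_inj fQ_inj h]
  · intro y hy
    rw [Finset.mem_coe, mem_QQ8] at hy
    obtain ⟨i, rfl⟩ := hy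
    exact ⟨FF fP i, by rw [Finset.mem_coe, mem_PP8]; exact ⟨i, rfl⟩, psi_FF i⟩
  · intro a b c ha hb hc
    obtain ⟨i, rfl⟩ := (mem_PP8 a).1 ha
    obtain ⟨j, rfl⟩ := (mem_PP8 b).1 hb
    obtain ⟨k, rfl⟩ := (mem_PP8 c).1 hc
    rw [psi_FF, psi_FF, psi_FF,
      explicit_face mem_PP8 EE_symm EE_irr fP_inj EE_total faceCheck_P.sep,
      explicit_face mem_QQ8 EE_symm EE_irr fQ_inj EE_total faceCheck_Q.sep]
    unfold Clockwise
    rw [det_FF, det_FF]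
    have h1 : ((DD fP i j k : ℝ) < 0) ↔ DD fP i j k < 0 := by norm_cast
    have h2 : ((DD fQ i j k : ℝ) < 0) ↔ DD fQ i j k < 0 := by norm_cast
    rw [h1, h2]
    constructor
    · rintro ⟨⟨e1, e2, e3⟩, h⟩
      exact ⟨⟨e1, e2, e3⟩, (cw_agree i j e1 k e2 e3).1 h⟩
    · rintro ⟨⟨e1, e2, e3⟩, h⟩
      exact ⟨⟨e1, e2, e3⟩, (cw_agree i j e1 k e2 e3).2 h⟩

/-- Two mapped 6-point sets in general position that have no compatible
triangulations, none even after adding one Steiner point to each, but that do have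
compatible triangulations after adding two Steiner points to each. -/
theorem stmt13 :
    ∃ (P Q : Finset Pt) (φ : Pt → Pt),
      P.card = 6 ∧ Q.card = 6 ∧ GenPos P ∧ GenPos Q ∧
      Set.BijOn φ (P : Set Pt) (Q : Set Pt) ∧
      (∀ TP TQ : Set (Sym2 Pt), IsTriangulation P TP → IsTriangulation Q TQ →
        ¬ CompatibleVia P Q TP TQ φ) ∧
      (∀ aP aQ : Pt, aP ∉ P → aQ ∉ Q →
        ∀ ψ : Pt → Pt, (∀ x ∈ P, ψ x = φ x) → ψ aP = aQ →
          ∀ TP TQ : Set (Sym2 Pt),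
            IsTriangulation (insert aP P) TP → IsTriangulation (insert aQ Q) TQ →
            ¬ CompatibleVia (insert aP P) (insert aQ Q) TP TQ ψ) ∧
      (∃ aP bP aQ bQ : Pt, aP ∉ P ∧ bP ∉ P ∧ aP ≠ bP ∧ aQ ∉ Q ∧ bQ ∉ Q ∧ aQ ≠ bQ ∧
        ∃ (ψ : Pt → Pt) (TP TQ : Set (Sym2 Pt)),
          (∀ x ∈ P, ψ x = φ x) ∧ ψ aP = aQ ∧ ψ bP = bQ ∧
          IsTriangulation (insert aP (insert bP P)) TP ∧
          IsTriangulation (insert aQ (insert bQ Q)) TQ ∧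
          CompatibleVia (insert aP (insert bP P)) (insert aQ (insert bQ Q)) TP TQ ψ) := by
  refine ⟨PP, QQ, phi, card_PP, card_QQ, genPos_PP, genPos_QQ, bijOn_phi, final_zero, final_one,
    (-5, 0), (5, 0), (-5, 0), (5, 0), ?_, ?_, ?_, ?_, ?_, ?_, psi, TT fP EE, TT fQ EE,
    fun x hx => psi_eq_phi hx, ?_, ?_, ?_, ?_, final_two⟩
  · rw [mem_PP]; simp
  · rw [mem_PP]; simp
  · intro h
    have := congrArg Prod.fst h
    norm_num at this
  · rw [mem_QQ]; simp
  · rw [mem_QQ]; simp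
  · intro h
    have := congrArg Prod.fst h
    norm_num at this
  · simp [psi]
  · simp [psi]
  · exact explicit_tri mem_PP8 EE_symm EE_irr fP_inj noCross_P maxCheck_P
  · exact explicit_tri mem_QQ8 EE_symm EE_irr fQ_inj noCross_Q maxCheck_Q
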